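/- arXiv:0801.0349 — 3 statements merged into one kernel-verified Lean document; each statement's English description precedes it below -/
import Mathlib

section
/- Programs are finite binary words $p\in\{0,1\}^*$, of length $|p|$. For $f,g:\mathbb N\to\mathbb N$ write $f\le_{ct}g$ if $\exists c\,\forall n\ f(n)\le g(n)+c$, and $g>_{ct}f$ if $f\le_{ct}g$ and $\forall c\,\exists n\ f(n)<g(n)-c$. Let $\emptyset^{(0)}=\emptyset$ and let $\emptyset^{(i+1)}$ be the jump of $\emptyset^{(i)}$, i.e. the set of $e$ such that the $e$-th function partial recursive in $\emptyset^{(i)}$ converges on $e$. For a partial function $W:\{0,1\}^*\rightharpoonup\mathbb N$ put $K_W(n)=\min\{|p| : W(p)=n\}$, with $\min\emptyset=+\infty$. Let $K^i=K_U$, where $U$ is any function partial recursive in $\emptyset^{(i)}$ that is optimal, i.e. $K_U\le_{ct}K_W$ for every $W:\{0,1\}^*\rightharpoonup\mathbb N$ partial recursive in $\emptyset^{(i)}$ (so $K_U$ is finite everywhere). Let $K^{i,\infty}(n)=\min\{|p| : \{t : V(p,t)\text{ converges}\}\text{ is finite with exactly } n \text{ elements}\}$, where $V:\{0,1\}^*\times\mathbb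 N\rightharpoonup\mathbb N$ is any function that is strongly universal among those partial recursive in $\emptyset^{(i)}$: there is a map $\mathrm{comp}:\{0,1\}^*\times\{0,1\}^*\to\{0,1\}^*$, recursive in $\emptyset^{(i)}$, such that the functions $(p,t)\mapsto V(\mathrm{comp}(e,p),t)$, $e\in\{0,1\}^*$, are exactly the functions $\{0,1\}^*\times\mathbb N\rightharpoonup\mathbb N$ partial recursive in $\emptyset^{(i)}$, and for each $e$ there is a constant $c(e)$ with $|\mathrm{comp}(e,p)|\le|p|+c(e)$ for all $p$. (Convergence of $V(p,t)$ reads as "program $p$ emits a symbol $1$ at step $t$ of its possibly infinite computation".) Then, for every $i\ge 0$ and every such choice of $U$ and $V$ at each level, $K^i>_{ct}K^{i,\infty}$ and $K^{i,\infty}>_{ct}K^{i+1}$. In particular, writing $K=K^0$, $K^\infty=K^{0,\infty}$, $K'=K^1$, $K'^\infty=K^{1,\infty}$, $K''=K^2$, one has $K>_{ct}K^\infty>_{ct}K'>_{ct}K'^\infty>_{ct}K''>_{ct}\cdots$. -/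
/-- Programs are finite binary words. -/
abbrev Word : Type := List Bool

/-- `f ≤ct g` : `∃ c ∀ n, f(n) ≤ g(n) + c`. Complexities are `ℕ∞`-valued, with `min ∅ = ⊤`;
the constant `c` is a natural number. -/
def LeCt (f g : ℕ → ℕ∞) : Prop := ∃ c : ℕ, ∀ n : ℕ, f n ≤ g n + c

/-- `g >ct f` : `f ≤ct g` and `∀ c ∃ n, f(n) < g(n) - c`. -/
def GtCt (g f : ℕ → ℕ∞) : Prop := LeCt f g ∧ ∀ c : ℕ, ∃ n : ℕ, f n + c < g n

open Classical in
/-- The characteristic function of a set of integers, used as an oracle. -/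
noncomputable def chi (A : Set ℕ) : ℕ →. ℕ :=
  fun n => Part.some (if n ∈ A then 1 else 0)

/-- Codes for partial recursive functions relative to an oracle:
the constructors of `Nat.Partrec.Code` plus an `oracle` constructor. -/
inductive OCode : Type
  | zero : OCode
  | succ : OCode
  | left : OCode
  | right : OCode
  | oracle : OCode
  | pair : OCode → OCode → OCode
  | comp : OCode → OCode → OCode
  | prec : OCode → OCode → OCode
  | rfind' : OCode → OCode

/-- Evaluation of an oracle code relative to the oracle `O`. -/
def OCode.evalO (O : ℕ →. ℕ) : OCode → ℕ →. ℕ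
  | .zero => pure 0
  | .succ => Nat.succ
  | .left => ↑fun n : ℕ => n.unpair.1
  | .right => ↑fun n : ℕ => n.unpair.2
  | .oracle => O
  | .pair cf cg => fun n => Nat.pair <$> cf.evalO O n <*> cg.evalO O n
  | .comp cf cg => fun n => cg.evalO O n >>= cf.evalO O
  | .prec cf cg =>
    Nat.unpaired fun a n =>
      n.rec (cf.evalO O a) fun y IH => do
        let i ← IH
        cg.evalO O (Nat.pair a (Nat.pair y i))
  | .rfind' cf =>
    Nat.unpaired fun a m =>
      (Nat.rfind fun n => (fun m => m = 0) <$> cf.evalO O (Nat.pair a (n + m))).map (· + m)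

/-- A (bijective) Gödel numbering of oracle codes. -/
def encodeOCode : OCode → ℕ
  | .zero => 0
  | .succ => 1
  | .left => 2
  | .right => 3
  | .oracle => 4
  | .pair a b => 4 * Nat.pair (encodeOCode a) (encodeOCode b) + 5
  | .comp a b => 4 * Nat.pair (encodeOCode a) (encodeOCode b) + 6
  | .prec a b => 4 * Nat.pair (encodeOCode a) (encodeOCode b) + 7
  | .rfind' a => 4 * encodeOCode a + 8

/-- The jump of `A` : the halting problem
`{e : the e-th function partial recursive in A converges on e}`. -/
def jump (A : Set ℕ) : Set ℕ :=
  {e : ℕ | ∃ c : OCode, encodeOCode c = e ∧ (c.evalO (chi A) e).Dom}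

/-- `∅^(i)` : the `i`-th jump of the empty set. -/
def emptyJump : ℕ → Set ℕ
  | 0 => ∅
  | i + 1 => jump (emptyJump i)

/-- `K_V(n) = min {|p| : V(p) = n}` for a partial function `V : {0,1}* ⇀ ℕ`,
with value `⊤` when there is no such `p`. -/
noncomputable def KOf (V : Word →. ℕ) (n : ℕ) : ℕ∞ :=
  ⨅ (p : Word) (_ : n ∈ V p), (p.length : ℕ∞)

/-- `U` is optimal among the functions `{0,1}* ⇀ ℕ` partial recursive in `A`. -/
def OptimalIn (A : Set ℕ) (U : Word →. ℕ) : Prop :=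
  RecursiveIn {chi A} U ∧ ∀ W : Word →. ℕ, RecursiveIn {chi A} W → LeCt (KOf U) (KOf W)

/-- `V : {0,1}* × ℕ ⇀ ℕ` is strongly universal among the functions partial recursive in `A`:
for a compiler `comp` recursive in `A`, the functions `V_e(p,t) = V(comp(e,p),t)` enumerate the
class of all functions `{0,1}* × ℕ ⇀ ℕ` partial recursive in `A`, and for each `e` there is a
constant `c(e)` with `|comp(e,p)| ≤ |p| + c(e)` for all `p`. -/
def StronglyUniversal₂In (A : Set ℕ) (V : Word → ℕ →. ℕ) : Prop :=
  RecursiveIn₂ {chi A} V ∧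
    ∃ comp : Word → Word → Word, ComputableIn₂ {chi A} comp ∧
      (∀ e : Word, RecursiveIn₂ {chi A} fun p => V (comp e p)) ∧
      (∀ W : Word → ℕ →. ℕ, RecursiveIn₂ {chi A} W →
        ∃ e : Word, ∀ (p : Word) (t : ℕ), V (comp e p) t = W p t) ∧
      (∀ e : Word, ∃ c : ℕ, ∀ p : Word, (comp e p).length ≤ p.length + c)

/-- Complexity with possibly infinite computations and unary output: convergence of `V(p,t)`
reads as "program `p` emits a symbol `1` at step `t`", and the value at `n` is the shortest length
of a program that emits exactly `n` symbols in all (`⊤` when there is none). -/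
noncomputable def KInfOf (V : Word → ℕ →. ℕ) (n : ℕ) : ℕ∞ :=
  ⨅ (p : Word) (_ : {t : ℕ | (V p t).Dom}.Finite ∧ {t : ℕ | (V p t).Dom}.ncard = n),
    (p.length : ℕ∞)

/-- The oracle codes enumerate exactly the functions partial recursive in the oracle. -/
theorem OCode.exists_code {O f : ℕ →. ℕ} :
    Nat.RecursiveIn {O} f ↔ ∃ c : OCode, c.evalO O = f := by
  constructor
  · intro h
    induction h with
    | zero => exact ⟨.zero, rfl⟩
    | succ => exact ⟨.succ, rfl⟩
    | left => exact ⟨.left, rfl⟩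
    | right => exact ⟨.right, rfl⟩
    | oracle g hg => exact ⟨.oracle, by simpa [OCode.evalO] using hg.symm⟩
    | pair _ _ h1 h2 => obtain ⟨a, rfl⟩ := h1; obtain ⟨b, rfl⟩ := h2; exact ⟨.pair a b, rfl⟩
    | comp _ _ h1 h2 => obtain ⟨a, rfl⟩ := h1; obtain ⟨b, rfl⟩ := h2; exact ⟨.comp a b, rfl⟩
    | prec _ _ h1 h2 => obtain ⟨a, rfl⟩ := h1; obtain ⟨b, rfl⟩ := h2; exact ⟨.prec a b, rfl⟩
    | rfind _ h1 =>
      obtain ⟨a, rfl⟩ := h1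
      refine ⟨.comp (.rfind' a) (.pair (.pair .left .right) .zero), ?_⟩
      funext n
      simp [OCode.evalO, Seq.seq, pure, PFun.pure, Part.map_id']
  · rintro ⟨c, rfl⟩
    induction c with
    | zero => exact .zero
    | succ => exact .succ
    | left => exact .left
    | right => exact .right
    | oracle => exact .oracle _ rfl
    | pair _ _ h1 h2 => exact .pair h1 h2
    | comp _ _ h1 h2 => exact .comp h1 h2
    | prec _ _ h1 h2 => exact .prec h1 h2
    | rfind' a h1 =>
      have u := Primrec.unpair
      have g : Nat.RecursiveIn {O} (fun z : ℕ => (Part.some (Nat.pair z.unpair.1.unpair.1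
          (z.unpair.2 + z.unpair.1.unpair.2)) : Part ℕ)) :=
        Nat.Primrec.recursiveIn (f := fun z : ℕ => Nat.pair z.unpair.1.unpair.1
          (z.unpair.2 + z.unpair.1.unpair.2)) (Primrec.nat_iff.1
          (Primrec₂.natPair.comp (Primrec.fst.comp (u.comp (Primrec.fst.comp u)))
            (Primrec.nat_add.comp (Primrec.snd.comp u)
              (Primrec.snd.comp (u.comp (Primrec.fst.comp u))))))
      have ad : Nat.RecursiveIn {O}
          (fun z : ℕ => (Part.some (z.unpair.1 + z.unpair.2) : Part ℕ)) :=
        Nat.Primrec.recursiveIn (f := fun z : ℕ => z.unpair.1 + z.unpair.2)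
          (Primrec.nat_iff.1 (Primrec.nat_add.comp (Primrec.fst.comp u) (Primrec.snd.comp u)))
      refine (ad.comp ((Nat.RecursiveIn.rfind (h1.comp g)).pair .right)).of_eq fun z => ?_
      have hb : ∀ x : ℕ, (Part.some x >>= OCode.evalO O a) = OCode.evalO O a x :=
        fun x => Part.bind_some x _
      simp [OCode.evalO, Seq.seq, Nat.unpaired, Part.bind_some_eq_map, Part.map_map, hb,
        Function.comp_def]

/-- Every oracle code has its own number. -/
theorem encodeOCode_injective : Function.Injective encodeOCode := by
  intro a
  induction a with
  | zero | succ | left | right | oracle =>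
    intro b h; cases b <;> simp only [encodeOCode] at h <;> first | rfl | omega
  | pair a₁ a₂ h1 h2 | comp a₁ a₂ h1 h2 | prec a₁ a₂ h1 h2 =>
    intro b h
    cases b <;> simp only [encodeOCode] at h <;> try omega
    have := Nat.pair_eq_pair.1 (Nat.eq_of_mul_eq_mul_left four_pos (Nat.add_right_cancel h))
    rw [h1 this.1, h2 this.2]
  | rfind' a h1 =>
    intro b h
    cases b <;> simp only [encodeOCode] at h <;> try omega
    rw [h1 (Nat.eq_of_mul_eq_mul_left four_pos (Nat.add_right_cancel h))]

/-- The complexity given by an optimal function takes values in `ℕ`. -/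
theorem OptimalIn.KOf_ne_top {A : Set ℕ} {U : Word →. ℕ} (h : OptimalIn A U) (n : ℕ) :
    KOf U n ≠ ⊤ := by
  obtain ⟨c, hc⟩ := h.2 (fun p => Part.some p.length) (Partrec.recursiveIn
    (Computable.partrec (f := fun p : Word => p.length) Computable.list_length))
  have : KOf (fun p => Part.some p.length) n ≤ n :=
    (iInf₂_le (List.replicate n true) (by simp)).trans (by simp)
  have h2 := (hc n).trans (add_le_add_left this _)
  intro h3
  rw [h3] at h2
  simp at h2

/-- The complexity `K^∞` given by a strongly universal function takes values in `ℕ`. -/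
theorem StronglyUniversal₂In.KInfOf_ne_top {A : Set ℕ} {V : Word → ℕ →. ℕ}
    (h : StronglyUniversal₂In A V) (n : ℕ) : KInfOf V n ≠ ⊤ := by
  obtain ⟨_, comp, _, _, h3, _⟩ := h
  let W : Word → ℕ →. ℕ := fun p t => ((if t < p.length then some 0 else none : Option ℕ) : Part ℕ)
  have hp : Partrec₂ W := Computable.ofOption (Primrec.to_comp (Primrec.ite
    (Primrec.nat_lt.comp Primrec.snd (Primrec.list_length.comp Primrec.fst))
    (Primrec.const _) (Primrec.const _)))
  obtain ⟨e, he⟩ := h3 W (show RecursiveIn _ _ from Nat.Partrec.recursiveIn hp)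
  have hs : {t : ℕ | (V (comp e (List.replicate n true)) t).Dom} = Set.Iio n := by
    ext t
    simp only [he, W, Set.mem_ofPred_eq, Set.mem_Iio, List.length_replicate]
    split_ifs with h <;> simp [h]
  have : KInfOf V n ≤ (comp e (List.replicate n true)).length :=
    iInf₂_le _ ⟨by rw [hs]; exact Set.finite_Iio n,
      by rw [hs]; simp [Set.ncard_eq_toFinset_card']⟩
  exact fun h => absurd (h ▸ this) (by simp)

open Encodable

/-- The list of the first `s` values of the characteristic function of `A`. -/
noncomputable def oraclePrefix (A : Set ℕ) : ℕ → List ℕ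
  | 0 => []
  | s + 1 => oraclePrefix A s ++ [A.indicator 1 s]

@[simp]
theorem length_oraclePrefix (A : Set ℕ) (s : ℕ) : (oraclePrefix A s).length = s := by
  induction s with
  | zero => rfl
  | succ s ih => simp [oraclePrefix, ih]

theorem getElem?_oraclePrefix (A : Set ℕ) {s x : ℕ} (h : x < s) :
    (oraclePrefix A s)[x]? = some (A.indicator 1 x) := by
  induction s with
  | zero => omega
  | succ s ih =>
    rcases Nat.lt_succ_iff_lt_or_eq.1 h with h | rfl
    · rw [oraclePrefix, List.getElem?_append_left (by simpa using h), ih h]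
    · simp [oraclePrefix]

theorem chi_eq (A : Set ℕ) (x : ℕ) : chi A x = Part.some (A.indicator 1 x) := by
  classical
  simp [chi, Set.indicator_apply]

theorem mem_getElem?_oraclePrefix {A : Set ℕ} {s x y : ℕ} :
    y ∈ (oraclePrefix A s)[x]? ↔ x < s ∧ y = A.indicator 1 x := by
  rcases lt_or_ge x s with h | h
  · rw [getElem?_oraclePrefix A h]
    simp [h, eq_comm]
  · rw [List.getElem?_eq_none (by simpa using h)]
    simp [h]

/-- `P` computes `f` from finite prefixes of the oracle `A`: the values of `P` on longer and longer
prefixes are consistent and have `f` as their limit. -/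
structure IsApprox {α β : Type*} [Primcodable α] [Primcodable β] (A : Set ℕ)
    (P : List ℕ → α → Option β) (f : α →. β) : Prop where
  primrec : Primrec₂ P
  mono : ∀ {s t x y}, s ≤ t → y ∈ P (oraclePrefix A s) x → y ∈ P (oraclePrefix A t) x
  mem_iff : ∀ {x y}, y ∈ f x ↔ ∃ s, y ∈ P (oraclePrefix A s) x

section Closure

variable {A : Set ℕ}

theorem IsApprox.of_primrec {g : ℕ → ℕ} (hg : Primrec g) :
    IsApprox A (fun _ x => some (g x)) (fun x => Part.some (g x)) where
  primrec := Primrec.option_some.comp (hg.comp Primrec.snd)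
  mono _ h := h
  mem_iff := by simp [eq_comm]

theorem IsApprox.oracle : IsApprox A (fun σ x => σ[x]?) (chi A) where
  primrec := Primrec.list_getElem?
  mono {s t x y} hst h := by
    rw [mem_getElem?_oraclePrefix] at h ⊢
    exact ⟨h.1.trans_le hst, h.2⟩
  mem_iff {x y} := by
    simp only [mem_getElem?_oraclePrefix, chi_eq, Part.mem_some_iff]
    exact ⟨fun h => ⟨x + 1, by omega, h⟩, fun ⟨_, _, h⟩ => h⟩

theorem IsApprox.pair {P Q : List ℕ → ℕ → Option ℕ} {f g : ℕ →. ℕ} (hP : IsApprox A P f)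
    (hQ : IsApprox A Q g) :
    IsApprox A (fun σ x => (P σ x).bind fun a => (Q σ x).map fun b => Nat.pair a b)
      (fun n => Nat.pair <$> f n <*> g n) where
  primrec := Primrec.option_bind hP.primrec (Primrec.option_map
    (hQ.primrec.comp (Primrec.fst.comp Primrec.fst) (Primrec.snd.comp Primrec.fst))
    (Primrec₂.natPair.comp (Primrec.snd.comp Primrec.fst) Primrec.snd))
  mono {s t x y} hst h := by
    simp only [Option.mem_def, Option.bind_eq_some_iff, Option.map_eq_some_iff] at h ⊢
    obtain ⟨a, ha, b, hb, rfl⟩ := h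
    exact ⟨a, hP.mono hst ha, b, hQ.mono hst hb, rfl⟩
  mem_iff {x y} := by
    simp only [Option.mem_def, Option.bind_eq_some_iff, Option.map_eq_some_iff, Seq.seq,
      Part.map_eq_map, Part.bind_map, Part.mem_bind_iff, Part.mem_map_iff, hP.mem_iff, hQ.mem_iff]
    constructor
    · rintro ⟨a, ⟨s, hs⟩, b, ⟨t, ht⟩, rfl⟩
      exact ⟨max s t, a, hP.mono (le_max_left _ _) hs, b, hQ.mono (le_max_right _ _) ht, rfl⟩
    · rintro ⟨s, a, ha, b, hb, rfl⟩
      exact ⟨a, ⟨s, ha⟩, b, ⟨s, hb⟩, rfl⟩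

theorem IsApprox.comp {P Q : List ℕ → ℕ → Option ℕ} {f g : ℕ →. ℕ} (hP : IsApprox A P f)
    (hQ : IsApprox A Q g) :
    IsApprox A (fun σ x => (Q σ x).bind (P σ)) (fun n => g n >>= f) where
  primrec := Primrec.option_bind hQ.primrec
    (hP.primrec.comp (Primrec.fst.comp Primrec.fst) Primrec.snd)
  mono {s t x y} hst h := by
    simp only [Option.mem_def, Option.bind_eq_some_iff] at h ⊢
    obtain ⟨a, ha, hb⟩ := h
    exact ⟨a, hQ.mono hst ha, hP.mono hst hb⟩
  mem_iff {x y} := by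
    refine Part.mem_bind_iff.trans ?_
    simp only [Option.mem_def, Option.bind_eq_some_iff, hP.mem_iff, hQ.mem_iff]
    constructor
    · rintro ⟨a, ⟨s, hs⟩, t, ht⟩
      exact ⟨max s t, a, hQ.mono (le_max_left _ _) hs, hP.mono (le_max_right _ _) ht⟩
    · rintro ⟨s, a, ha, hb⟩
      exact ⟨a, ⟨s, ha⟩, s, hb⟩

theorem mem_rec_bind_mono {P Q : List ℕ → ℕ → Option ℕ} {f g : ℕ →. ℕ} (hP : IsApprox A P f)
    (hQ : IsApprox A Q g) (a n : ℕ) {s t y : ℕ} (hst : s ≤ t)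
    (h : y ∈ (Nat.rec (P (oraclePrefix A s) a) (fun y IH => IH.bind fun i =>
      Q (oraclePrefix A s) (Nat.pair a (Nat.pair y i))) n : Option ℕ)) :
    y ∈ (Nat.rec (P (oraclePrefix A t) a) (fun y IH => IH.bind fun i =>
      Q (oraclePrefix A t) (Nat.pair a (Nat.pair y i))) n : Option ℕ) := by
  induction n generalizing y with
  | zero => exact hP.mono hst h
  | succ n ih =>
    simp only [Option.mem_def, Option.bind_eq_some_iff] at h ih ⊢
    obtain ⟨i, hi, hb⟩ := h
    exact ⟨i, ih hi, hQ.mono hst hb⟩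

theorem IsApprox.prec {P Q : List ℕ → ℕ → Option ℕ} {f g : ℕ →. ℕ} (hP : IsApprox A P f)
    (hQ : IsApprox A Q g) :
    IsApprox A
      (fun σ x => Nat.rec (P σ x.unpair.1)
        (fun y IH => IH.bind fun i => Q σ (Nat.pair x.unpair.1 (Nat.pair y i))) x.unpair.2)
      (fun p => let (a, n) := Nat.unpair p
        n.rec (f a) fun y IH => do
          let i ← IH
          g (Nat.pair a (Nat.pair y i))) where
  primrec := by
    refine Primrec.nat_rec' (h := fun z w => w.2.bind fun i =>
      Q z.1 (Nat.pair z.2.unpair.1 (Nat.pair w.1 i)))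
      (Primrec.snd.comp (Primrec.unpair.comp Primrec.snd))
      (hP.primrec.comp Primrec.fst (Primrec.fst.comp (Primrec.unpair.comp Primrec.snd))) ?_
    refine Primrec.option_bind (Primrec.snd.comp Primrec.snd) (hQ.primrec.comp
      (Primrec.fst.comp (Primrec.fst.comp Primrec.fst)) (Primrec₂.natPair.comp
        (Primrec.fst.comp (Primrec.unpair.comp (Primrec.snd.comp (Primrec.fst.comp Primrec.fst))))
        (Primrec₂.natPair.comp (Primrec.fst.comp (Primrec.snd.comp Primrec.fst)) Primrec.snd)))
  mono hst h := mem_rec_bind_mono hP hQ _ _ hst h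
  mem_iff {x y} := by
    dsimp only
    generalize x.unpair.2 = n at *
    induction n generalizing y with
    | zero => exact hP.mem_iff
    | succ n ih =>
      simp only [Option.mem_def, Option.bind_eq_some_iff, Part.bind_eq_bind, Part.mem_bind_iff,
        hQ.mem_iff] at ih ⊢
      constructor
      · rintro ⟨a, ha, t, ht⟩
        obtain ⟨s, hs⟩ := ih.1 ha
        exact ⟨max s t, a, mem_rec_bind_mono hP hQ _ _ (le_max_left _ _) hs, hQ.mono (le_max_right _ _) ht⟩
      · rintro ⟨s, a, ha, hb⟩
        exact ⟨a, ih.2 ⟨s, ha⟩, s, hb⟩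

/-- The number `n` is the least zero of `h`, and `h` is defined up to `n`. -/
def IsLeastZero (h : ℕ → Option ℕ) (n : ℕ) : Prop :=
  h n = some 0 ∧ ∀ j < n, ∃ v, h j = some (v + 1)

theorem IsLeastZero.unique {h : ℕ → Option ℕ} {m n : ℕ} (hm : IsLeastZero h m)
    (hn : IsLeastZero h n) : m = n := by
  rcases lt_trichotomy m n with hlt | rfl | hlt
  · obtain ⟨v, hv⟩ := hn.2 m hlt
    simp [hm.1] at hv
  · rfl
  · obtain ⟨v, hv⟩ := hm.2 n hlt
    simp [hn.1] at hv

theorem primrecRel_isLeastZero {P : List ℕ → ℕ → Option ℕ} (hP : Primrec₂ P) :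
    PrimrecRel fun (z : List ℕ × ℕ) (n : ℕ) => IsLeastZero (fun j => P z.1 (Nat.pair z.2 j)) n := by
  have h1 : PrimrecRel fun (j : ℕ) (z : List ℕ × ℕ) =>
      ∃ v, P z.1 (Nat.pair z.2 j) = some (v + 1) := by
    have hv : Primrec fun w : ℕ × (List ℕ × ℕ) => (P w.2.1 (Nat.pair w.2.2 w.1)).getD 0 :=
      Primrec.option_getD.comp (hP.comp (Primrec.fst.comp Primrec.snd)
        (Primrec₂.natPair.comp (Primrec.snd.comp Primrec.snd) Primrec.fst)) (Primrec.const 0)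
    refine PrimrecPred.of_eq (PrimrecRel.comp Primrec.nat_lt (Primrec.const 0) hv) fun w => ?_
    change _ ↔ ∃ v, P w.2.1 (Nat.pair w.2.2 w.1) = some (v + 1)
    cases P w.2.1 (Nat.pair w.2.2 w.1) with
    | none => simp
    | some k => cases k <;> simp
  have h2 : PrimrecPred fun w : (List ℕ × ℕ) × ℕ => P w.1.1 (Nat.pair w.1.2 w.2) = some 0 :=
    PrimrecRel.comp Primrec.eq (hP.comp (Primrec.fst.comp Primrec.fst)
      (Primrec₂.natPair.comp (Primrec.snd.comp Primrec.fst) Primrec.snd)) (Primrec.const _)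
  have h3 : PrimrecPred fun w : (List ℕ × ℕ) × ℕ =>
      ∀ j < w.2, ∃ v, P w.1.1 (Nat.pair w.1.2 j) = some (v + 1) :=
    (PrimrecRel.comp h1.forall_mem_list (Primrec.list_range.comp Primrec.snd) Primrec.fst).of_eq
      fun w => by simp
  exact h2.and h3

open Classical in
/-- Bounded search for the least zero. -/
noncomputable def boundedLeastZero (h : ℕ → Option ℕ) (s : ℕ) : Option ℕ :=
  Nat.rec none (fun n IH => if IsLeastZero h n then some n else IH) s

theorem mem_boundedLeastZero {h : ℕ → Option ℕ} {s n : ℕ} :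
    n ∈ boundedLeastZero h s ↔ n < s ∧ IsLeastZero h n := by
  induction s with
  | zero => simp [boundedLeastZero]
  | succ s ih =>
    have : boundedLeastZero h (s + 1) =
        (open Classical in if IsLeastZero h s then some s else boundedLeastZero h s) := rfl
    rw [this]
    split_ifs with hs
    · simp only [Option.mem_def, Option.some.injEq]
      exact ⟨by rintro rfl; exact ⟨by omega, hs⟩, fun hn => hs.unique hn.2⟩
    · rw [ih]
      constructor
      · exact fun hn => ⟨by omega, hn.2⟩
      · rintro ⟨hn, hz⟩
        refine ⟨lt_of_le_of_ne (by omega) ?_, hz⟩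
        rintro rfl
        exact hs hz

theorem IsApprox.rfind {P : List ℕ → ℕ → Option ℕ} {f : ℕ →. ℕ} (hP : IsApprox A P f) :
    IsApprox A (fun σ x => boundedLeastZero (fun j => P σ (Nat.pair x j)) σ.length)
      (fun a => Nat.rfind fun n => (fun m => m = 0) <$> f (Nat.pair a n)) where
  primrec := by
    classical
    refine Primrec.nat_rec' (h := fun z w =>
      if IsLeastZero (fun j => P z.1 (Nat.pair z.2 j)) w.1 then some w.1 else w.2)
      (Primrec.list_length.comp Primrec.fst) (Primrec.const none) ?_
    exact Primrec.ite ((primrecRel_isLeastZero hP.primrec).comp Primrec.fst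
      (Primrec.fst.comp Primrec.snd)) (Primrec.option_some.comp (Primrec.fst.comp Primrec.snd))
      (Primrec.snd.comp Primrec.snd)
  mono {s t x y} hst h := by
    simp only [mem_boundedLeastZero, length_oraclePrefix] at h ⊢
    obtain ⟨hs, h0, h1⟩ := h
    refine ⟨by omega, hP.mono hst h0, fun j hj => ?_⟩
    obtain ⟨v, hv⟩ := h1 j hj
    exact ⟨v, hP.mono hst hv⟩
  mem_iff {x y} := by
    refine Nat.mem_rfind.trans ?_
    simp only [mem_boundedLeastZero, length_oraclePrefix, Part.map_eq_map, Part.mem_map_iff,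
      hP.mem_iff]
    constructor
    · rintro ⟨⟨a, ⟨s, hs⟩, ha⟩, h⟩
      have ha : a = 0 := by simpa using ha
      subst ha
      have h' : ∀ j : ℕ, ∃ r : ℕ, j < y →
          ∃ v, P (oraclePrefix A r) (Nat.pair x j) = some (v + 1) := by
        intro j
        by_cases hj : j < y
        · obtain ⟨a, ⟨r, hr⟩, ha⟩ := h hj
          refine ⟨r, fun _ => ⟨a - 1, ?_⟩⟩
          have : a ≠ 0 := by simpa using ha
          rw [Nat.sub_add_cancel (by omega)]
          exact hr
        · exact ⟨0, fun h => absurd h hj⟩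
      choose r hr using h'
      refine ⟨max (y + 1) (max s ((Finset.range y).sup r)), by omega,
        hP.mono (by omega) hs, fun j hj => ?_⟩
      obtain ⟨v, hv⟩ := hr j hj
      have : r j ≤ (Finset.range y).sup r := Finset.le_sup (Finset.mem_range.2 hj)
      exact ⟨v, hP.mono (by omega) hv⟩
    · rintro ⟨s, hs, h0, h1⟩
      refine ⟨⟨0, ⟨s, h0⟩, by simp⟩, fun {j} hj => ?_⟩
      obtain ⟨v, hv⟩ := h1 j hj
      exact ⟨v + 1, ⟨s, hv⟩, by simp⟩

theorem Nat.RecursiveIn.exists_isApprox {f : ℕ →. ℕ} (hf : Nat.RecursiveIn {chi A} f) :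
    ∃ P, IsApprox A P f := by
  induction hf with
  | zero => exact ⟨_, IsApprox.of_primrec (_root_.Primrec.const 0)⟩
  | succ => exact ⟨_, IsApprox.of_primrec _root_.Primrec.succ⟩
  | left => exact ⟨_, IsApprox.of_primrec (_root_.Primrec.fst.comp _root_.Primrec.unpair)⟩
  | right => exact ⟨_, IsApprox.of_primrec (_root_.Primrec.snd.comp _root_.Primrec.unpair)⟩
  | oracle g hg => rw [Set.mem_singleton_iff.1 hg]; exact ⟨_, IsApprox.oracle⟩
  | pair _ _ h1 h2 => obtain ⟨P, hP⟩ := h1; obtain ⟨Q, hQ⟩ := h2; exact ⟨_, hP.pair hQ⟩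
  | comp _ _ h1 h2 => obtain ⟨P, hP⟩ := h1; obtain ⟨Q, hQ⟩ := h2; exact ⟨_, hP.comp hQ⟩
  | prec _ _ h1 h2 => obtain ⟨P, hP⟩ := h1; obtain ⟨Q, hQ⟩ := h2; exact ⟨_, hP.prec hQ⟩
  | rfind _ h1 => obtain ⟨P, hP⟩ := h1; exact ⟨_, hP.rfind⟩

variable {α β : Type*} [Primcodable α] [Primcodable β]

/-- Normal form: a function recursive in `A` is computed from finite prefixes of `A`. -/
theorem RecursiveIn.exists_isApprox {f : α →. β} (hf : RecursiveIn {chi A} f) :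
    ∃ P, IsApprox A P f := by
  obtain ⟨P, hP⟩ := Nat.RecursiveIn.exists_isApprox hf
  refine ⟨fun σ x => (P σ (encode x)).bind decode,
    Primrec.option_bind (hP.primrec.comp Primrec.fst (Primrec.encode.comp Primrec.snd))
      (Primrec.decode.comp Primrec.snd), ?_, ?_⟩
  · intro s t x y hst h
    simp only [Option.mem_def, Option.bind_eq_some_iff] at h ⊢
    obtain ⟨a, ha, hb⟩ := h
    exact ⟨a, hP.mono hst ha, hb⟩
  · intro x y
    have key : ∀ n, (∃ s, n ∈ P (oraclePrefix A s) (encode x)) ↔ ∃ y ∈ f x, encode y = n := by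
      intro n
      rw [← hP.mem_iff]
      simp
    simp only [Option.mem_def, Option.bind_eq_some_iff] at key ⊢
    constructor
    · intro hy
      obtain ⟨s, hs⟩ := (key (encode y)).2 ⟨y, hy, rfl⟩
      exact ⟨s, _, hs, encodek y⟩
    · rintro ⟨s, n, hn, hy⟩
      obtain ⟨y', hy', rfl⟩ := (key n).1 ⟨s, hn⟩
      rw [encodek, Option.some.injEq] at hy
      exact hy ▸ hy'

end Closure

section Search

variable {A : Set ℕ}

theorem Nat.RecursiveIn.comp_total {O : Set (ℕ →. ℕ)} {f : ℕ →. ℕ} {g : ℕ → ℕ}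
    (hf : Nat.RecursiveIn O f) (hg : Nat.RecursiveIn O fun n => Part.some (g n)) :
    Nat.RecursiveIn O fun n => f (g n) :=
  (hf.comp hg).of_eq fun _ => Part.bind_some _ _

theorem Nat.RecursiveIn.pair_total {O : Set (ℕ →. ℕ)} {f g : ℕ → ℕ}
    (hf : Nat.RecursiveIn O fun n => Part.some (f n))
    (hg : Nat.RecursiveIn O fun n => Part.some (g n)) :
    Nat.RecursiveIn O fun n => Part.some (Nat.pair (f n) (g n)) :=
  (hf.pair hg).of_eq fun _ => by simp [Seq.seq]

theorem Primrec.nat_recursiveIn {O : Set (ℕ →. ℕ)} {f : ℕ → ℕ} (hf : Primrec f) :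
    Nat.RecursiveIn O fun n => Part.some (f n) :=
  Nat.Primrec.recursiveIn (Primrec.nat_iff.1 hf)

theorem recursiveIn_oraclePrefix (A : Set ℕ) :
    Nat.RecursiveIn {chi A} fun s => Part.some (encode (oraclePrefix A s)) := by
  have hidx : Primrec fun z : ℕ => z.unpair.2.unpair.1 :=
    Primrec.fst.comp (Primrec.unpair.comp (Primrec.snd.comp Primrec.unpair))
  have hacc : Primrec fun z : ℕ => z.unpair.2.unpair.2 :=
    Primrec.snd.comp (Primrec.unpair.comp (Primrec.snd.comp Primrec.unpair))
  have hstep : Primrec fun w : ℕ =>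
      encode ((decode (α := List ℕ) w.unpair.1).getD [] ++ [w.unpair.2]) :=
    Primrec.encode.comp (Primrec.list_append.comp
      (Primrec.option_getD.comp (Primrec.decode.comp (Primrec.fst.comp Primrec.unpair))
        (Primrec.const []))
      (Primrec.list_cons.comp (Primrec.snd.comp Primrec.unpair) (Primrec.const [])))
  have hchi : Nat.RecursiveIn {chi A} fun n => Part.some (A.indicator 1 n) :=
    (Nat.RecursiveIn.oracle _ (Set.mem_singleton _)).of_eq (chi_eq A)
  have h := (Nat.RecursiveIn.prec (Primrec.const 0).nat_recursiveIn
    (hstep.nat_recursiveIn.comp_total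
      (hacc.nat_recursiveIn.pair_total (hchi.comp_total hidx.nat_recursiveIn)))).comp_total
    (Primrec.const 0 |>.nat_recursiveIn.pair_total Primrec.id.nat_recursiveIn)
  refine h.of_eq fun s => ?_
  simp only [Nat.unpair_pair, id]
  induction s with
  | zero => rfl
  | succ s ih =>
    simp only [ih]
    simp [oraclePrefix]

variable {α β : Type*} [Primcodable α] [Primcodable β]

/-- Unbounded search along the prefixes of `A` is recursive in `A`. -/
theorem recursiveIn_rfindOpt {R : List ℕ → α → Option β} (hR : Primrec₂ R) :
    RecursiveIn {chi A} fun x => Nat.rfindOpt fun s => R (oraclePrefix A s) x := by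
  have hval : Primrec fun w : ℕ => ((decode (α := α) w.unpair.1).bind fun x =>
      R ((decode (α := List ℕ) w.unpair.2).getD []) x) :=
    Primrec.option_bind (Primrec.decode.comp (Primrec.fst.comp Primrec.unpair))
      (hR.comp (Primrec.option_getD.comp (Primrec.decode.comp
        (Primrec.snd.comp (Primrec.unpair.comp Primrec.fst))) (Primrec.const [])) Primrec.snd)
  have hpre : Nat.RecursiveIn {chi A} fun z =>
      Part.some (Nat.pair z.unpair.1 (encode (oraclePrefix A z.unpair.2))) :=
    (Primrec.fst.comp Primrec.unpair).nat_recursiveIn.pair_total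
      ((recursiveIn_oraclePrefix A).comp_total (Primrec.snd.comp Primrec.unpair).nat_recursiveIn)
  have htest : Primrec fun w : ℕ => if ((decode (α := α) w.unpair.1).bind fun x =>
      R ((decode (α := List ℕ) w.unpair.2).getD []) x).isSome then 0 else 1 :=
    Primrec.ite (PrimrecRel.comp Primrec.eq (Primrec.option_isSome.comp hval) (Primrec.const true))
      (Primrec.const 0) (Primrec.const 1)
  have hout : Nat.RecursiveIn {chi A} fun w : ℕ => (((decode (α := α) w.unpair.1).bind fun x =>
      R ((decode (α := List ℕ) w.unpair.2).getD []) x).map encode : Option ℕ) :=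
    Nat.Partrec.recursiveIn (Partrec.nat_iff.1 (Computable.ofOption
      (Primrec.option_map hval (Primrec.encode.comp₂ Primrec₂.right)).to_comp))
  have hsearch := Nat.RecursiveIn.rfind (htest.nat_recursiveIn.comp_total hpre)
  have h := (hout.comp_total hpre).comp (Primrec.id.nat_recursiveIn.pair hsearch)
  refine h.of_eq fun n => ?_
  simp only [Nat.unpair_pair, encodek, Option.getD_some, id, Seq.seq]
  ext y
  have hfind : (Nat.rfind fun s => Part.some (decide ((if ((decode (α := α) n).bind fun x =>
      R (oraclePrefix A s) x).isSome = true then 0 else 1) = 0))) =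
      Nat.rfind fun s => Part.some ((decode (α := α) n).bind fun x =>
        R (oraclePrefix A s) x).isSome := by
    congr 1
    funext s
    split_ifs with hs <;> simp_all
  simp only [Part.map_eq_map, Part.map_some, Part.bind_some, Part.bind_eq_bind, hfind,
    Part.bind_map, Nat.unpair_pair]
  cases decode (α := α) n with
  | none =>
    simp only [Option.bind_none, Option.map_none, Part.coe_none, Part.bind_none, Part.mem_bind_iff]
    simp
  | some x =>
    simp only [Option.bind_some, Part.coe_some, Part.bind_some, Nat.rfindOpt, Part.mem_map_iff,
      Part.mem_bind_iff, Part.mem_coe, Option.mem_def, Option.map_eq_some_iff]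
    constructor
    · rintro ⟨s, hs, b, hb, rfl⟩
      exact ⟨b, ⟨s, hs, hb⟩, rfl⟩
    · rintro ⟨b, ⟨s, hs, hb⟩, rfl⟩
      exact ⟨s, hs, b, hb, rfl⟩

end Search

section SemiDecidable

variable {A : Set ℕ} {α β : Type*} [Primcodable α] [Primcodable β]

/-- A predicate that is semidecided by prefixes of `A` is the domain of a function
recursive in `A`. -/
theorem exists_recursiveIn_dom_iff {Q : List ℕ → α → Prop} (hQ : PrimrecRel Q) :
    ∃ f : α →. ℕ, RecursiveIn {chi A} f ∧ ∀ x, (f x).Dom ↔ ∃ s, Q (oraclePrefix A s) x := by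
  classical
  have hR : Primrec₂ fun σ x => if Q σ x then some 0 else none :=
    Primrec.ite hQ (Primrec.const _) (Primrec.const _)
  refine ⟨_, recursiveIn_rfindOpt hR, fun x => ?_⟩
  rw [Nat.rfindOpt_dom]
  refine exists_congr fun s => ?_
  by_cases h : Q (oraclePrefix A s) x <;> simp [h]

/-- The code of a constant function. -/
def OCode.const : ℕ → OCode
  | 0 => .zero
  | n + 1 => .comp .succ (OCode.const n)

theorem OCode.evalO_const (O : ℕ →. ℕ) (n x : ℕ) : (OCode.const n).evalO O x = Part.some n := by
  induction n with
  | zero => rfl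
  | succ n ih =>
    simp only [OCode.const, OCode.evalO, ih]
    exact Part.bind_some _ _

theorem primrec_encodeOCode_const : Primrec fun n => encodeOCode (OCode.const n) := by
  refine (Primrec.nat_rec₁ (f := fun _ c => 4 * Nat.pair 1 c + 6) 0 ?_).of_eq fun n => ?_
  · exact Primrec.nat_add.comp (Primrec.nat_mul.comp (Primrec.const 4)
      (Primrec₂.natPair.comp (Primrec.const 1) Primrec.snd)) (Primrec.const 6)
  · induction n with
    | zero => rfl
    | succ n ih => simp only [OCode.const, encodeOCode, ih]

/-- The domain of a function recursive in `A` is many-one reducible to the jump of `A`. -/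
theorem RecursiveIn.exists_mem_jump_iff {f : α →. β} (hf : RecursiveIn {chi A} f) :
    ∃ g : α → ℕ, Primrec g ∧ ∀ x, g x ∈ jump A ↔ (f x).Dom := by
  obtain ⟨c, hc⟩ := OCode.exists_code.1 hf
  refine ⟨fun x => encodeOCode (.comp c (OCode.const (encode x))), ?_, fun x => ?_⟩
  · exact Primrec.nat_add.comp (Primrec.nat_mul.comp (Primrec.const 4)
      (Primrec₂.natPair.comp (Primrec.const _) (primrec_encodeOCode_const.comp Primrec.encode)))
      (Primrec.const 6)
  · have key : ∀ e, (OCode.comp c (OCode.const (encode x))).evalO (chi A) e =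
        (f x).map encode := by
      intro e
      simp only [OCode.evalO, OCode.evalO_const, hc]
      exact (Part.bind_some _ _).trans (by simp)
    constructor
    · rintro ⟨c', hc', h⟩
      rw [encodeOCode_injective hc', key] at h
      exact h
    · intro h
      exact ⟨_, rfl, by rw [key]; exact h⟩

end SemiDecidable

section Words

/-- The binary words of length at most `k`. -/
def wordsUpTo : ℕ → List Word
  | 0 => [[]]
  | k + 1 => [] :: ((wordsUpTo k).map (List.cons true) ++ (wordsUpTo k).map (List.cons false))

theorem mem_wordsUpTo {k : ℕ} {p : Word} : p ∈ wordsUpTo k ↔ p.length ≤ k := by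
  induction k generalizing p with
  | zero => simp [wordsUpTo]
  | succ k ih =>
    cases p with
    | nil => simp [wordsUpTo]
    | cons b p => cases b <;> simp [wordsUpTo, ih]

theorem primrec_wordsUpTo : Primrec wordsUpTo := by
  have hcons (b : Bool) : Primrec₂ fun (_ : ℕ × List Word) (p : Word) => b :: p :=
    Primrec.list_cons.comp (Primrec.const b) Primrec.snd
  refine (Primrec.nat_rec₁ (f := fun _ (L : List Word) =>
    [] :: (L.map (List.cons true) ++ L.map (List.cons false))) [[]] ?_).of_eq fun n => ?_
  · exact Primrec.list_cons.comp (Primrec.const []) (Primrec.list_append.comp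
      (Primrec.list_map Primrec.snd (hcons true)) (Primrec.list_map Primrec.snd (hcons false)))
  · induction n with
    | zero => rfl
    | succ n ih => simp only [wordsUpTo, ih]

end Words

section Complexity

variable {A : Set ℕ}

theorem KOf_le {V : Word →. ℕ} {n : ℕ} {p : Word} (h : n ∈ V p) : KOf V n ≤ p.length :=
  iInf₂_le p h

theorem KInfOf_le {V : Word → ℕ →. ℕ} {n : ℕ} {p : Word}
    (h : {t : ℕ | (V p t).Dom}.encard = n) : KInfOf V n ≤ p.length := by
  have hfin : {t : ℕ | (V p t).Dom}.Finite := Set.finite_of_encard_eq_coe h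
  exact iInf₂_le p ⟨hfin, by simp [Set.ncard, h]⟩

theorem OptimalIn.exists_KOf_le {U : Word →. ℕ} (hU : OptimalIn A U) {W : Word →. ℕ}
    (hW : RecursiveIn {chi A} W) :
    ∃ c : ℕ, ∀ p n, n ∈ W p → KOf U n ≤ p.length + c := by
  obtain ⟨c, hc⟩ := hU.2 W hW
  exact ⟨c, fun p n h => (hc n).trans (by gcongr; exact KOf_le h)⟩

theorem StronglyUniversal₂In.exists_KInfOf_le {V : Word → ℕ →. ℕ}
    (hV : StronglyUniversal₂In A V) {W : Word → ℕ →. ℕ} (hW : RecursiveIn₂ {chi A} W) :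
    ∃ c : ℕ, ∀ p (n : ℕ), {t : ℕ | (W p t).Dom}.encard = n → KInfOf V n ≤ p.length + c := by
  obtain ⟨_, comp, _, _, h3, h4⟩ := hV
  obtain ⟨e, he⟩ := h3 W hW
  obtain ⟨c, hc⟩ := h4 e
  refine ⟨c, fun p n h => (KInfOf_le (p := comp e p) ?_).trans (mod_cast hc p)⟩
  simpa only [he] using h

theorem leCt_KOf {V : Word →. ℕ} {f : ℕ → ℕ∞} {c : ℕ}
    (h : ∀ p n, n ∈ V p → f n ≤ p.length + c) : LeCt f (KOf V) :=
  ⟨c, fun n => tsub_le_iff_right.1 (le_iInf₂ fun p hp => tsub_le_iff_right.2 (h p n hp))⟩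

theorem leCt_KInfOf {V : Word → ℕ →. ℕ} {f : ℕ → ℕ∞} {c : ℕ}
    (h : ∀ p (n : ℕ), {t : ℕ | (V p t).Dom}.encard = n → f n ≤ p.length + c) :
    LeCt f (KInfOf V) := by
  refine ⟨c, fun n => tsub_le_iff_right.1 (le_iInf₂ fun p hp => tsub_le_iff_right.2 (h p n ?_))⟩
  rw [← hp.1.cast_ncard_eq, hp.2]

/-- If a word `p` describes in the sense of `f` a number whose complexity `g` exceeds `2|p|`,
then `g` is not bounded by `f` up to a constant. -/
theorem exists_add_lt_of_diagonal {f g : ℕ → ℕ∞} {c : ℕ}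
    (h : ∀ p : Word, ∃ n, f n ≤ p.length + c ∧ ((2 * p.length + 1 : ℕ) : ℕ∞) ≤ g n) (d : ℕ) :
    ∃ n, f n + d < g n := by
  obtain ⟨n, h1, h2⟩ := h (List.replicate (c + d) true)
  refine ⟨n, lt_of_le_of_lt (add_le_add_left h1 _) (lt_of_lt_of_le ?_ h2)⟩
  rw [List.length_replicate]
  norm_cast
  omega

theorem encard_Iio_nat (n : ℕ) : (Set.Iio n).encard = n := by
  rw [← Finset.coe_Iio, Set.encard_coe_eq_coe_finsetCard, Nat.card_Iio]

theorem leCt_KInfOf_KOf {U : Word →. ℕ} (hU : RecursiveIn {chi A} U) {V : Word → ℕ →. ℕ}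
    (hV : StronglyUniversal₂In A V) : LeCt (KInfOf V) (KOf U) := by
  obtain ⟨P, hP⟩ := hU.exists_isApprox
  have hQ : PrimrecRel fun (σ : List ℕ) (x : Word × ℕ) => x.2 < (P σ x.1).getD 0 :=
    Primrec.nat_lt.comp (Primrec.snd.comp Primrec.snd) (Primrec.option_getD.comp
      (hP.primrec.comp Primrec.fst (Primrec.fst.comp Primrec.snd)) (Primrec.const 0))
  obtain ⟨f, hf, hdom⟩ := exists_recursiveIn_dom_iff (A := A) hQ
  obtain ⟨c, hc⟩ := hV.exists_KInfOf_le (W := fun p t => f (p, t)) hf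
  refine leCt_KOf (c := c) fun p n hn => hc p n ?_
  have : {t : ℕ | (f (p, t)).Dom} = Set.Iio n := by
    ext t
    simp only [Set.mem_ofPred_eq, hdom, Set.mem_Iio]
    constructor
    · rintro ⟨s, hs⟩
      cases hv : P (oraclePrefix A s) p with
      | none => simp [hv] at hs
      | some m =>
        have := Part.mem_unique hn (hP.mem_iff.2 ⟨s, hv⟩)
        simpa [hv, this] using hs
    · intro ht
      obtain ⟨s, hs⟩ := hP.mem_iff.1 hn
      exact ⟨s, by simpa [Option.mem_def.1 hs] using ht⟩
  rw [this, encard_Iio_nat]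

theorem gtCt_KOf_KInfOf {U : Word →. ℕ} (hU : RecursiveIn {chi A} U) {V : Word → ℕ →. ℕ}
    (hV : StronglyUniversal₂In A V) : GtCt (KOf U) (KInfOf V) := by
  refine ⟨leCt_KInfOf_KOf hU hV, ?_⟩
  obtain ⟨P, hP⟩ := hU.exists_isApprox
  have hR : PrimrecRel fun (q : Word) (z : List ℕ × ℕ) => z.2 < ((P z.1 q).map Nat.succ).getD 0 :=
    Primrec.nat_lt.comp (Primrec.snd.comp Primrec.snd) (Primrec.option_getD.comp
      (Primrec.option_map (hP.primrec.comp (Primrec.fst.comp Primrec.snd) Primrec.fst)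
        (Primrec.succ.comp₂ Primrec₂.right)) (Primrec.const 0))
  have hQ : PrimrecRel fun (σ : List ℕ) (x : Word × ℕ) => ∃ q ∈ wordsUpTo (2 * x.1.length),
      x.2 < ((P σ q).map Nat.succ).getD 0 :=
    PrimrecRel.comp hR.exists_mem_list
      (primrec_wordsUpTo.comp (Primrec.nat_mul.comp (Primrec.const 2)
        (Primrec.list_length.comp (Primrec.fst.comp Primrec.snd))))
      (Primrec.pair Primrec.fst (Primrec.snd.comp Primrec.snd))
  obtain ⟨f, hf, hdom⟩ := exists_recursiveIn_dom_iff (A := A) hQ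
  obtain ⟨c, hc⟩ := hV.exists_KInfOf_le (W := fun p t => f (p, t)) hf
  refine exists_add_lt_of_diagonal (c := c) fun p => ?_
  have hS : ∀ t, (f (p, t)).Dom ↔ ∃ q : Word, q.length ≤ 2 * p.length ∧ ∃ m ∈ U q, t ≤ m := by
    intro t
    simp only [hdom, mem_wordsUpTo]
    constructor
    · rintro ⟨s, q, hq, hlt⟩
      cases hv : P (oraclePrefix A s) q with
      | none => simp [hv] at hlt
      | some m =>
        exact ⟨q, hq, m, hP.mem_iff.2 ⟨s, hv⟩, by simpa [hv, Nat.lt_succ_iff] using hlt⟩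
    · rintro ⟨q, hq, m, hm, ht⟩
      obtain ⟨s, hs⟩ := hP.mem_iff.1 hm
      exact ⟨s, q, hq, by simpa [Option.mem_def.1 hs, Nat.lt_succ_iff] using ht⟩
  have hfin : {t : ℕ | (f (p, t)).Dom}.Finite := by
    have : {t : ℕ | (f (p, t)).Dom} ⊆ ⋃ q ∈ {q | q ∈ wordsUpTo (2 * p.length)},
        {t | ∃ m ∈ U q, t ≤ m} := by
      intro t ht
      obtain ⟨q, hq, hm⟩ := (hS t).1 ht
      exact Set.mem_biUnion (mem_wordsUpTo.2 hq) hm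
    refine (Set.Finite.biUnion (List.finite_toSet _) fun q _ => ?_).subset this
    by_cases hq : (U q).Dom
    · refine (Set.finite_Iic ((U q).get hq)).subset ?_
      rintro t ⟨m, hm, ht⟩
      rwa [Part.mem_unique hm (Part.get_mem hq)] at ht
    · refine Set.finite_empty.subset ?_
      rintro t ⟨m, hm, ht⟩
      exact hq (Part.dom_iff_mem.2 ⟨m, hm⟩)
  have hlower : IsLowerSet {t : ℕ | (f (p, t)).Dom} := by
    intro a b hab ha
    obtain ⟨q, hq, m, hm, ht⟩ := (hS a).1 ha
    exact (hS b).2 ⟨q, hq, m, hm, hab.trans ht⟩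
  obtain ⟨n, hn⟩ : ∃ n, {t : ℕ | (f (p, t)).Dom} = Set.Iio n := by
    obtain ⟨b, hb⟩ := hfin.exists_notMem
    classical
    have hex : ∃ b, b ∉ {t : ℕ | (f (p, t)).Dom} := ⟨b, hb⟩
    refine ⟨Nat.find hex, Set.ext fun t => ⟨fun ht => ?_, fun ht => ?_⟩⟩
    · by_contra hlt
      exact Nat.find_spec hex (hlower (not_lt.1 hlt) ht)
    · exact not_not.1 (Nat.find_min hex ht)
  refine ⟨n, hc p n (by rw [hn, encard_Iio_nat]), le_iInf₂ fun q hq => ?_⟩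
  by_contra hlt
  have hlen : q.length ≤ 2 * p.length := by
    have := not_le.1 hlt
    norm_cast at this
    omega
  have : n ∈ {t : ℕ | (f (p, t)).Dom} := (hS n).2 ⟨q, hlen, n, hq, le_rfl⟩
  rw [hn] at this
  exact lt_irrefl n this

end Complexity

section Count

variable {A : Set ℕ}

theorem Primrec.nat_count {α : Type*} [Primcodable α] {R : α → ℕ → Prop}
    [∀ a, DecidablePred (R a)] {h : α → ℕ} (hR : PrimrecRel R) (hh : Primrec h) :
    Primrec fun a => Nat.count (R a) (h a) := by
  refine (Primrec.nat_rec' (g := fun _ => 0) (h := fun a w => w.2 + if R a w.1 then 1 else 0) hh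
    (Primrec.const 0) ?_).of_eq fun a => ?_
  · exact Primrec.nat_add.comp (Primrec.snd.comp Primrec.snd)
      (Primrec.ite (hR.comp Primrec.fst (Primrec.fst.comp Primrec.snd)) (Primrec.const 1)
        (Primrec.const 0))
  · induction h a with
    | zero => rfl
    | succ n ih => simp only [ih, Nat.count_succ]

theorem le_encard_iff_exists_le_count {S : Set ℕ} {D : ℕ → ℕ → Prop} [∀ s, DecidablePred (D s)]
    (hmono : ∀ {s r t}, s ≤ r → D s t → D r t) (hS : ∀ t, t ∈ S ↔ ∃ s, D s t) (k : ℕ) :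
    (k : ℕ∞) ≤ S.encard ↔ ∃ s, k ≤ Nat.count (D s) s := by
  simp only [Nat.count_eq_card_filter_range]
  constructor
  · intro h
    obtain ⟨T, hTS, hT⟩ := Set.exists_subset_encard_eq h
    lift T to Finset ℕ using Set.finite_of_encard_eq_coe hT
    rw [Set.encard_coe_eq_coe_finsetCard, Nat.cast_inj] at hT
    have hr : ∀ t : ℕ, ∃ r, t ∈ T → D r t := by
      intro t
      by_cases ht : t ∈ T
      · obtain ⟨r, hr⟩ := (hS t).1 (hTS ht)
        exact ⟨r, fun _ => hr⟩
      · exact ⟨0, fun h => absurd h ht⟩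
    choose r hr using hr
    refine ⟨max (T.sup r) (T.sup id + 1), hT ▸ Finset.card_le_card fun t ht => ?_⟩
    have h1 : r t ≤ T.sup r := Finset.le_sup ht
    have h2 : id t ≤ T.sup id := Finset.le_sup ht
    exact Finset.mem_filter.2 ⟨Finset.mem_range.2 (by simp only [id] at h2; omega),
      hmono (h1.trans (le_max_left _ _)) (hr t ht)⟩
  · rintro ⟨s, hs⟩
    calc (k : ℕ∞) ≤ ((Finset.range s).filter (D s)).card := mod_cast hs
      _ = (((Finset.range s).filter (D s) : Finset ℕ) : Set ℕ).encard :=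
        (Set.encard_coe_eq_coe_finsetCard _).symm
      _ ≤ S.encard := Set.encard_le_encard fun t ht =>
        (hS t).2 ⟨s, (Finset.mem_filter.1 ht).2⟩

/-- Whether a program emits at least `k` symbols is decidable in the jump. -/
theorem RecursiveIn₂.exists_mem_jump_iff_le_encard {V : Word → ℕ →. ℕ}
    (hV : RecursiveIn₂ {chi A} V) :
    ∃ g : Word → ℕ → ℕ, Primrec₂ g ∧
      ∀ p k, g p k ∈ jump A ↔ (k : ℕ∞) ≤ {t : ℕ | (V p t).Dom}.encard := by
  classical
  obtain ⟨P, hP⟩ := RecursiveIn.exists_isApprox hV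
  have hD : PrimrecRel fun (z : List ℕ × Word × ℕ) (t : ℕ) => (P z.1 (z.2.1, t)).isSome = true :=
    PrimrecRel.comp Primrec.eq (Primrec.option_isSome.comp (hP.primrec.comp
      (Primrec.fst.comp Primrec.fst) (Primrec.pair
        (Primrec.fst.comp (Primrec.snd.comp Primrec.fst)) Primrec.snd))) (Primrec.const true)
  have hQ : PrimrecRel fun (σ : List ℕ) (x : Word × ℕ) =>
      x.2 ≤ Nat.count (fun t => (P σ (x.1, t)).isSome = true) σ.length :=
    Primrec.nat_le.comp (Primrec.snd.comp Primrec.snd)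
      (Primrec.nat_count hD (Primrec.list_length.comp Primrec.fst))
  obtain ⟨f, hf, hdom⟩ := exists_recursiveIn_dom_iff (A := A) hQ
  obtain ⟨g, hg, hjump⟩ := hf.exists_mem_jump_iff
  refine ⟨fun p k => g (p, k), hg, fun p k => ?_⟩
  rw [hjump, hdom, le_encard_iff_exists_le_count
    (D := fun s t => (P (oraclePrefix A s) (p, t)).isSome = true)]
  · simp only [length_oraclePrefix]
  · intro s r t hsr h
    obtain ⟨y, hy⟩ := Option.isSome_iff_exists.1 h
    exact Option.isSome_iff_exists.2 ⟨y, hP.mono hsr hy⟩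
  · intro t
    change (V p t).Dom ↔ _
    rw [Part.dom_iff_mem]
    simp only [Option.isSome_iff_exists]
    rw [exists_comm]
    exact exists_congr fun y => hP.mem_iff (x := (p, t))

theorem encard_eq_iff_le_and_not_le {S : Set ℕ} {n : ℕ} :
    S.encard = n ↔ (n : ℕ∞) ≤ S.encard ∧ ¬((n + 1 : ℕ) : ℕ∞) ≤ S.encard := by
  rw [Nat.cast_add, Nat.cast_one, ENat.add_one_le_iff (ENat.natCast_ne_top n), not_lt, and_comm,
    le_antisymm_iff]

theorem leCt_KOf_jump_KInfOf {V : Word → ℕ →. ℕ} (hV : RecursiveIn₂ {chi A} V) {U : Word →. ℕ}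
    (hU : OptimalIn (jump A) U) : LeCt (KOf U) (KInfOf V) := by
  obtain ⟨g, hg, hgm⟩ := hV.exists_mem_jump_iff_le_encard
  have hn : Primrec fun z : List ℕ × Word => z.1.length.unpair.1 :=
    Primrec.fst.comp (Primrec.unpair.comp (Primrec.list_length.comp Primrec.fst))
  have hR : Primrec₂ fun (σ : List ℕ) (p : Word) =>
      if σ[g p σ.length.unpair.1]? = some 1 ∧ σ[g p (σ.length.unpair.1 + 1)]? = some 0
      then some σ.length.unpair.1 else none := by
    refine Primrec.ite (PrimrecPred.and ?_ ?_) (Primrec.option_some.comp hn) (Primrec.const none)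
    · exact PrimrecRel.comp Primrec.eq (Primrec.list_getElem?.comp Primrec.fst
        (hg.comp Primrec.snd hn)) (Primrec.const _)
    · exact PrimrecRel.comp Primrec.eq (Primrec.list_getElem?.comp Primrec.fst
        (hg.comp Primrec.snd (Primrec.succ.comp hn))) (Primrec.const _)
  obtain ⟨c, hc⟩ := hU.exists_KOf_le (recursiveIn_rfindOpt (A := jump A) hR)
  refine leCt_KInfOf (c := c) fun p n hpn => hc p n ?_
  have hspec : ∀ m s, (m ∈ (if (oraclePrefix (jump A) s)[g p s.unpair.1]? = some 1 ∧
      (oraclePrefix (jump A) s)[g p (s.unpair.1 + 1)]? = some 0 then some s.unpair.1 else none)) →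
      m = n := by
    intro m s h
    simp only [Option.mem_def, Option.ite_none_right_eq_some, Option.some.injEq] at h
    obtain ⟨⟨h1, h2⟩, rfl⟩ := h
    have h1 := (mem_getElem?_oraclePrefix.1 h1).2
    have h2 := (mem_getElem?_oraclePrefix.1 h2).2
    have h1 : g p s.unpair.1 ∈ jump A := by
      by_contra h
      simp [h] at h1
    have h2 : g p (s.unpair.1 + 1) ∉ jump A := by
      intro h
      simp [h] at h2
    rw [hgm] at h1 h2
    have := encard_eq_iff_le_and_not_le.2 ⟨h1, h2⟩
    rw [hpn] at this
    exact (Nat.cast_inj.1 this).symm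
  have hdom : (Nat.rfindOpt fun s => if (oraclePrefix (jump A) s)[g p s.unpair.1]? = some 1 ∧
      (oraclePrefix (jump A) s)[g p (s.unpair.1 + 1)]? = some 0
      then some s.unpair.1 else none).Dom := by
    rw [Nat.rfindOpt_dom]
    obtain ⟨h1, h2⟩ := encard_eq_iff_le_and_not_le.1 hpn
    rw [← hgm] at h1 h2
    have hb := Nat.right_le_pair n (g p n + g p (n + 1) + 1)
    refine ⟨Nat.pair n (g p n + g p (n + 1) + 1), n, ?_⟩
    simp only [Nat.unpair_pair]
    rw [getElem?_oraclePrefix _ (by omega), getElem?_oraclePrefix _ (by omega)]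
    simp [h1, h2]
  simp only [length_oraclePrefix]
  obtain ⟨m, hm⟩ := Part.dom_iff_mem.1 hdom
  obtain ⟨s, hs⟩ := Nat.rfindOpt_spec hm
  exact hspec m s hs ▸ hm

theorem gtCt_KInfOf_KOf_jump {V : Word → ℕ →. ℕ} (hV : RecursiveIn₂ {chi A} V) {U : Word →. ℕ}
    (hU : OptimalIn (jump A) U) : GtCt (KInfOf V) (KOf U) := by
  refine ⟨leCt_KOf_jump_KInfOf hV hU, ?_⟩
  classical
  obtain ⟨g, hg, hgm⟩ := hV.exists_mem_jump_iff_le_encard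
  have hn : Primrec fun σ : List ℕ => σ.length.unpair.1 :=
    Primrec.fst.comp (Primrec.unpair.comp Primrec.list_length)
  have hT : PrimrecRel fun (q : Word) (σ : List ℕ) =>
      σ[g q σ.length.unpair.1]? = some 0 ∨ σ[g q (σ.length.unpair.1 + 1)]? = some 1 := by
    refine PrimrecPred.or ?_ ?_
    · exact PrimrecRel.comp Primrec.eq (Primrec.list_getElem?.comp Primrec.snd
        (hg.comp Primrec.fst (hn.comp Primrec.snd))) (Primrec.const _)
    · exact PrimrecRel.comp Primrec.eq (Primrec.list_getElem?.comp Primrec.snd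
        (hg.comp Primrec.fst (Primrec.succ.comp (hn.comp Primrec.snd)))) (Primrec.const _)
  have hR : Primrec₂ fun (σ : List ℕ) (p : Word) =>
      if ∀ q ∈ wordsUpTo (2 * p.length),
        σ[g q σ.length.unpair.1]? = some 0 ∨ σ[g q (σ.length.unpair.1 + 1)]? = some 1
      then some σ.length.unpair.1 else none :=
    @Primrec.ite _ _ _ _ _ (fun _ => Classical.propDecidable _) _ _
      (PrimrecRel.comp hT.forall_mem_list (primrec_wordsUpTo.comp
      (Primrec.nat_mul.comp (Primrec.const 2) (Primrec.list_length.comp Primrec.snd)))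
      Primrec.fst) (Primrec.option_some.comp (hn.comp Primrec.fst)) (Primrec.const none)
  obtain ⟨c, hc⟩ := hU.exists_KOf_le (recursiveIn_rfindOpt (A := jump A) hR)
  refine exists_add_lt_of_diagonal (c := c) fun p => ?_
  have hfin : {n : ℕ | ∃ q ∈ wordsUpTo (2 * p.length),
      {t : ℕ | (V q t).Dom}.encard = n}.Finite := by
    refine ((List.finite_toSet (wordsUpTo (2 * p.length))).image
      fun q => {t : ℕ | (V q t).Dom}.ncard).subset ?_
    rintro n ⟨q, hq, h⟩
    exact ⟨q, hq, by simp [Set.ncard, h]⟩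
  have hdom : (Nat.rfindOpt fun s => if ∀ q ∈ wordsUpTo (2 * p.length),
        (oraclePrefix (jump A) s)[g q (oraclePrefix (jump A) s).length.unpair.1]? = some 0 ∨
        (oraclePrefix (jump A) s)[g q ((oraclePrefix (jump A) s).length.unpair.1 + 1)]? = some 1
      then some (oraclePrefix (jump A) s).length.unpair.1 else none).Dom := by
    obtain ⟨n, hnot⟩ := hfin.exists_notMem
    set b := ((wordsUpTo (2 * p.length)).toFinset.sup fun q => g q n + g q (n + 1)) + 1 with hb
    have hnb := Nat.right_le_pair n b
    refine Nat.rfindOpt_dom.2 ⟨Nat.pair n b, n, ?_⟩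
    simp only [length_oraclePrefix, Nat.unpair_pair]
    rw [if_pos]
    · rfl
    intro q hq
    have hqb : g q n + g q (n + 1) < b := Nat.lt_succ_of_le
      (Finset.le_sup (f := fun q => g q n + g q (n + 1)) (List.mem_toFinset.2 hq))
    rw [getElem?_oraclePrefix _ (by omega), getElem?_oraclePrefix _ (by omega)]
    by_contra hcon
    refine hnot ⟨q, hq, encard_eq_iff_le_and_not_le.2 ?_⟩
    rw [← hgm, ← hgm]
    by_cases h1 : g q n ∈ jump A <;> by_cases h2 : g q (n + 1) ∈ jump A <;> simp_all
  obtain ⟨n, hmem⟩ := Part.dom_iff_mem.1 hdom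
  refine ⟨n, hc p n hmem, le_iInf₂ fun q hq => ?_⟩
  by_contra hlt
  have hlen : q.length ≤ 2 * p.length := by
    have := not_le.1 hlt
    norm_cast at this
    omega
  obtain ⟨s, hs⟩ := Nat.rfindOpt_spec hmem
  simp only [length_oraclePrefix, Option.mem_def, Option.ite_none_right_eq_some,
    Option.some.injEq] at hs
  obtain ⟨hall, rfl⟩ := hs
  have hcard : {t : ℕ | (V q t).Dom}.encard = (s.unpair.1 : ℕ) := by
    rw [← hq.1.cast_ncard_eq, hq.2]
  obtain ⟨h1, h2⟩ := encard_eq_iff_le_and_not_le.1 hcard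
  rw [← hgm] at h1 h2
  rcases hall q (mem_wordsUpTo.2 hlen) with h | h
  · simpa [h1] using (mem_getElem?_oraclePrefix.1 h).2
  · simpa [h2] using (mem_getElem?_oraclePrefix.1 h).2

end Count

/-- For every `i ≥ 0` one has `K^i >ct K^{i,∞}` and `K^{i,∞} >ct K^{i+1}`. -/
theorem stmt2 (i : ℕ) (U : Word →. ℕ) (hU : OptimalIn (emptyJump i) U)
    (V : Word → ℕ →. ℕ) (hV : StronglyUniversal₂In (emptyJump i) V)
    (U' : Word →. ℕ) (hU' : OptimalIn (emptyJump (i + 1)) U') :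
    GtCt (KOf U) (KInfOf V) ∧ GtCt (KInfOf V) (KOf U') :=
  ⟨gtCt_KOf_KInfOf hU.1 hV, gtCt_KInfOf_KOf_jump hV.1 hU'⟩
end

section
/- Let $\varphi_a$ denote the partial recursive function $\mathbb N\rightharpoonup\mathbb N$ with Gödel number $a$, and let $PR$ be the set of partial recursive functions $\mathbb N\rightharpoonup\mathbb N$. An effective operation is a map $F:PR\to PR$ for which there is a total recursive $f:\mathbb N\to\mathbb N$ with $F(\varphi_a)=\varphi_{f(a)}$ for all $a$; let $\mathrm{Eff}$ be the set of effective operations. The iterators $It_n\in\mathrm{Eff}$ ($n\in\mathbb N$) are defined by $It_0(f)=f$ and $It_{n+1}(f)=It_n(f)\circ f$. A map $G:\{0,1\}^*\to\mathrm{Eff}$ is called effective if there is a total recursive $t:\{0,1\}^*\times\mathbb N\to\mathbb N$ with $G(p)(\varphi_a)=\varphi_{t(p,a)}$ for all $p,a$. An effective map $U:\{0,1\}^*\to\mathrm{Eff}$, $e\mapsto F_e:=U(e)$, is a strongly universal enumeration of the effective operations if there is a total recursive function $\mathrm{comp}:\{0,1\}^*\times\{0,1\}^*\to\{0,1\}^*$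 such that the maps $p\mapsto U(\mathrm{comp}(e,p))$, $e\in\{0,1\}^*$, are exactly the effective maps $\{0,1\}^*\to\mathrm{Eff}$, and such that for each $e$ there is a constant $c(e)$ with $|\mathrm{comp}(e,p)|\le|p|+c(e)$ for all $p$. Let $(F_e)_{e\in\{0,1\}^*}$ be a strongly universal enumeration of the effective operations. Then the set of pairs $(e,n)\in\{0,1\}^*\times\mathbb N$ such that $F_e=It_n$ (i.e. $e$ is a Gödel number for the iteration functional $It_n$) is $\Pi^0_2$-complete: it is $\Pi^0_2$, and every $\Pi^0_2$ set of integers is many-one reducible to it. -/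
open Nat.Partrec (Code)

/-- The partial recursive function `ℕ ⇀ ℕ` with Gödel number `e`. -/
def phi (e : ℕ) : ℕ →. ℕ := (Denumerable.ofNat Code e).eval

/-- The set `PR(ℕ→ℕ)` of partial recursive functions. -/
def PRFun : Type := {f : ℕ →. ℕ // Nat.Partrec f}

def phiP (e : ℕ) : PRFun := ⟨phi e, Nat.Partrec.Code.exists_code.mpr ⟨_, rfl⟩⟩

/-- `F` is induced by a total recursive function on Gödel numbers (which is then extensional). -/
def IsEffOp (F : PRFun → PRFun) : Prop :=
  ∃ f : ℕ → ℕ, Computable f ∧ ∀ a : ℕ, F (phiP a) = phiP (f a)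

/-- The effective operations `PR(ℕ→ℕ) → PR(ℕ→ℕ)`. -/
def Eff : Type := {F : PRFun → PRFun // IsEffOp F}

/-- Composition in `PR(ℕ→ℕ)`: `(g ∘ f)(x) = g(f(x))`. -/
def compPR (g f : PRFun) : PRFun :=
  ⟨fun x => (f.val x).bind g.val,
    Partrec.nat_iff.1
      ((Partrec.nat_iff.2 f.2).bind ((Partrec.nat_iff.2 g.2).comp Computable.snd))⟩

/-- `It_0(f) = f` and `It_{n+1}(f) = It_n(f) ∘ f`. -/
def ItFun : ℕ → PRFun → PRFun
  | 0 => fun f => f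
  | n + 1 => fun f => compPR (ItFun n f) f

theorem isEffOp_ItFun (n : ℕ) : IsEffOp (ItFun n) := by
  induction n with
  | zero => exact ⟨id, Computable.id, fun _ => rfl⟩
  | succ n ih =>
    obtain ⟨f, hf, h⟩ := ih
    refine ⟨fun a => Encodable.encode
      (Code.comp (Denumerable.ofNat Code (f a)) (Denumerable.ofNat Code a)), ?_, ?_⟩
    · exact Computable.encode.comp
        ((Nat.Partrec.Code.primrec₂_comp.to_comp).comp
          ((Computable.ofNat Code).comp hf) (Computable.ofNat Code))
    · intro a
      apply Subtype.ext
      simp only [ItFun, h a]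
      simp only [compPR, phiP, phi, Denumerable.ofNat_encode]
      rfl

/-- The iterators, as effective operations. -/
def It (n : ℕ) : Eff := ⟨ItFun n, isEffOp_ItFun n⟩

/-- An effective map `{0,1}* → Eff`: the operations `G p` are given by total recursive functions
on Gödel numbers, uniformly in the word `p`. -/
def IsEffMap (G : List Bool → Eff) : Prop :=
  ∃ t : List Bool → ℕ → ℕ, Computable₂ t ∧
    ∀ (p : List Bool) (a : ℕ), (G p).val (phiP a) = phiP (t p a)

/-- `U` is effective, and the maps `U_e : p ↦ U (comp e p)`, `e ∈ {0,1}*`, enumerate the class of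
all effective maps `{0,1}* → Eff`. -/
def IsUniversalVia (U : List Bool → Eff) (comp : List Bool → List Bool → List Bool) : Prop :=
  IsEffMap U ∧ Computable₂ comp ∧
    Set.range (fun e : List Bool => fun p : List Bool => U (comp e p)) = {G | IsEffMap G}

/-- `U` is strongly universal: universal via a compiler `comp` which, for each fixed `e`,
increases lengths by at most a constant. -/
def IsStronglyUniversal (U : List Bool → Eff) : Prop :=
  ∃ comp : List Bool → List Bool → List Bool, IsUniversalVia U comp ∧
    ∀ e : List Bool, ∃ c : ℕ, ∀ p : List Bool, (comp e p).length ≤ p.length + c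

/-- `A` is `Σ⁰₂`: `A = {x : ∃y ∀z R(x,y,z)}` for some recursive relation `R`. -/
def IsSigma2 {α : Type} [Primcodable α] (A : Set α) : Prop :=
  ∃ r : α → ℕ → ℕ → Bool, Computable (fun x : α × ℕ × ℕ => r x.1 x.2.1 x.2.2) ∧
    ∀ x : α, x ∈ A ↔ ∃ y : ℕ, ∀ z : ℕ, r x y z = true

/-- `A` is `Π⁰₂`: the complement of `A` is `Σ⁰₂`. -/
def IsPi2 {α : Type} [Primcodable α] (A : Set α) : Prop := IsSigma2 Aᶜ

/-- `A` is `Π⁰₂`-complete: it is `Π⁰₂`, and every `Π⁰₂` set of integers is many-one reducible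
to it. -/
def IsPi2Complete {α : Type} [Primcodable α] (A : Set α) : Prop :=
  IsPi2 A ∧ ∀ B : Set ℕ, IsPi2 B → ManyOneReducible (· ∈ B) (· ∈ A)

theorem phiP_surjective (f : PRFun) : ∃ a, phiP a = f := by
  obtain ⟨c, hc⟩ := Nat.Partrec.Code.exists_code.1 f.2
  refine ⟨Encodable.encode c, Subtype.ext ?_⟩
  simpa [phiP, phi] using hc

/-- A Gödel number of `It_n(φ_a)`. -/
def itIndex (n a : ℕ) : ℕ :=
  Nat.rec a (fun _ b => Encodable.encode
    (Code.comp (Denumerable.ofNat Code b) (Denumerable.ofNat Code a))) n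

theorem itFun_phiP (n a : ℕ) : ItFun n (phiP a) = phiP (itIndex n a) := by
  induction n with
  | zero => rfl
  | succ n ih =>
    apply Subtype.ext
    simp only [ItFun, ih]
    simp only [compPR, phiP, phi, itIndex, Denumerable.ofNat_encode]
    rfl

theorem computable₂_itIndex : Computable₂ itIndex := by
  refine Computable.nat_rec (f := fun p : ℕ × ℕ => p.1) (g := fun p : ℕ × ℕ => p.2)
    (h := fun (p : ℕ × ℕ) (q : ℕ × ℕ) => Encodable.encode
      (Code.comp (Denumerable.ofNat Code q.2) (Denumerable.ofNat Code p.2)))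
    Computable.fst Computable.snd ?_
  exact Computable.encode.comp
    ((Nat.Partrec.Code.primrec₂_comp.to_comp).comp
      ((Computable.ofNat Code).comp (Computable.snd.comp Computable.snd))
      ((Computable.ofNat Code).comp (Computable.snd.comp Computable.fst)))

/-- Extensional equality of `U(e)` and `It_n` only has to be tested on Gödel numbers. -/
theorem eq_It_iff {U : List Bool → Eff} {t : List Bool → ℕ → ℕ}
    (ht : ∀ p a, (U p).val (phiP a) = phiP (t p a)) (e : List Bool) (n : ℕ) :
    U e = It n ↔ ∀ a, phi (t e a) = phi (itIndex n a) := by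
  constructor
  · intro h a
    have h1 : phiP (t e a) = phiP (itIndex n a) := by
      rw [← ht, h, ← itFun_phiP]; rfl
    exact congrArg Subtype.val h1
  · intro h
    apply Subtype.ext
    funext f
    obtain ⟨a, rfl⟩ := phiP_surjective f
    rw [ht]
    exact (Subtype.ext (h a)).trans (itFun_phiP n a).symm

/-- The value of `φ_b(x)` if it is found within the bound `k`. -/
def phiStage (k b x : ℕ) : Option ℕ := Code.evaln k (Denumerable.ofNat Code b) x

theorem mem_phi_iff {b x v : ℕ} : v ∈ phi b x ↔ ∃ k, v ∈ phiStage k b x :=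
  Nat.Partrec.Code.evaln_complete

theorem computable_phiStage :
    Computable fun p : ℕ × ℕ × ℕ => phiStage p.1 p.2.1 p.2.2 :=
  Nat.Partrec.Code.primrec_evaln.to_comp.comp
    (((Computable.fst).pair ((Computable.ofNat Code).comp
      (Computable.fst.comp Computable.snd))).pair (Computable.snd.comp Computable.snd))

/-- `φ_b(x)` converges within the bound `k`, and this value is not found for `φ_c(x)` within the
bound `z`. -/
def differsAt (k b c x z : ℕ) : Bool :=
  (phiStage k b x).isSome && !decide (phiStage z c x = phiStage k b x)

theorem phi_ne_iff {b c : ℕ} :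
    phi b ≠ phi c ↔ ∃ x k, (∀ z, differsAt k b c x z = true) ∨
      ∀ z, differsAt k c b x z = true := by
  have key : ∀ b c x k, (∀ z, differsAt k b c x z = true) ↔
      ∃ v, v ∈ phiStage k b x ∧ v ∉ phi c x := by
    intro b c x k
    cases h : phiStage k b x with
    | none => simp [differsAt, h]
    | some v => simp [differsAt, h, mem_phi_iff]
  constructor
  · intro h
    by_contra! hc
    apply h
    funext x
    apply Part.ext
    intro v
    constructor
    · intro hv
      by_contra hv'
      obtain ⟨k, hk⟩ := mem_phi_iff.1 hv
      obtain ⟨z, hz⟩ := (hc x k).1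
      exact hz ((key b c x k).2 ⟨v, hk, hv'⟩ z)
    · intro hv
      by_contra hv'
      obtain ⟨k, hk⟩ := mem_phi_iff.1 hv
      obtain ⟨z, hz⟩ := (hc x k).2
      exact hz ((key c b x k).2 ⟨v, hk, hv'⟩ z)
  · rintro ⟨x, k, h | h⟩ heq
    · obtain ⟨v, hv, hn⟩ := (key b c x k).1 h
      exact hn (heq ▸ mem_phi_iff.2 ⟨k, hv⟩)
    · obtain ⟨v, hv, hn⟩ := (key c b x k).1 h
      exact hn (heq ▸ mem_phi_iff.2 ⟨k, hv⟩)

theorem computable_differsAt {α : Type} [Primcodable α] {k b c x z : α → ℕ}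
    (hk : Computable k) (hb : Computable b) (hc : Computable c) (hx : Computable x)
    (hz : Computable z) : Computable fun p => differsAt (k p) (b p) (c p) (x p) (z p) := by
  have h1 : Computable fun p => phiStage (k p) (b p) (x p) :=
    computable_phiStage.comp (hk.pair (hb.pair hx))
  have h2 : Computable fun p => phiStage (z p) (c p) (x p) :=
    computable_phiStage.comp (hz.pair (hc.pair hx))
  have h3 : Computable fun p =>
      decide (phiStage (z p) (c p) (x p) = phiStage (k p) (b p) (x p)) :=
    (Primrec.eq (α := Option ℕ)).decide.to_comp.comp h2 h1
  exact Primrec.and.to_comp.comp (Primrec.option_isSome.to_comp.comp h1)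
    (Primrec.not.to_comp.comp h3)

theorem isPi2_eq_It {U : List Bool → Eff} (hU : IsEffMap U) :
    IsPi2 {q : List Bool × ℕ | U q.1 = It q.2} := by
  obtain ⟨t, htc, ht⟩ := hU
  refine ⟨fun q y z =>
    let a := y.unpair.1
    let x := y.unpair.2.unpair.1
    let k := y.unpair.2.unpair.2.unpair.1
    let s := y.unpair.2.unpair.2.unpair.2
    bif decide (s = 0) then differsAt k (t q.1 a) (itIndex q.2 a) x z
      else differsAt k (itIndex q.2 a) (t q.1 a) x z, ?_, ?_⟩
  · have hy : Computable fun p : (List Bool × ℕ) × ℕ × ℕ => p.2.1 :=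
      Computable.fst.comp Computable.snd
    have hz : Computable fun p : (List Bool × ℕ) × ℕ × ℕ => p.2.2 :=
      Computable.snd.comp Computable.snd
    have hl : Computable fun n : ℕ => n.unpair.1 :=
      Computable.fst.comp Computable.unpair
    have hr : Computable fun n : ℕ => n.unpair.2 :=
      Computable.snd.comp Computable.unpair
    have ha := hl.comp hy
    have hx := hl.comp (hr.comp hy)
    have hk := hl.comp (hr.comp (hr.comp hy))
    have hs := hr.comp (hr.comp (hr.comp hy))
    have hb := htc.comp (Computable.fst.comp Computable.fst) ha
    have hc := computable₂_itIndex.comp (Computable.snd.comp Computable.fst) ha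
    exact Computable.cond
      ((Primrec.eq (α := ℕ)).decide.to_comp.comp hs (Computable.const 0))
      (computable_differsAt hk hb hc hx hz) (computable_differsAt hk hc hb hx hz)
  · rintro ⟨e, n⟩
    rw [Set.mem_compl_iff, Set.mem_ofPred_eq, eq_It_iff ht, not_forall]
    simp only [← ne_eq, phi_ne_iff]
    constructor
    · rintro ⟨a, x, k, h | h⟩
      · exact ⟨Nat.pair a (Nat.pair x (Nat.pair k 0)), by simpa using h⟩
      · exact ⟨Nat.pair a (Nat.pair x (Nat.pair k 1)), by simpa using h⟩
    · rintro ⟨y, h⟩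
      refine ⟨y.unpair.1, y.unpair.2.unpair.1, y.unpair.2.unpair.2.unpair.1, ?_⟩
      by_cases hs : y.unpair.2.unpair.2.unpair.2 = 0
      · left; simpa [hs] using h
      · right; simpa [hs] using h

/-- The search for a counterexample `z` to `r x m z`. -/
def searchFail (r : ℕ → ℕ → ℕ → Bool) (x m : ℕ) : Part ℕ :=
  Nat.rfind fun z => Part.some (!r x m z)

theorem searchFail_dom {r : ℕ → ℕ → ℕ → Bool} {x m : ℕ} :
    (searchFail r x m).Dom ↔ ∃ z, r x m z = false := by
  refine Nat.rfind_dom.trans ?_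
  constructor
  · rintro ⟨z, hz, -⟩
    exact ⟨z, by simpa using hz⟩
  · rintro ⟨z, hz⟩
    exact ⟨z, by simpa using hz, fun _ => trivial⟩

theorem partrec_searchFail {r : ℕ → ℕ → ℕ → Bool}
    (hr : Computable fun x : ℕ × ℕ × ℕ => r x.1 x.2.1 x.2.2) :
    Partrec fun p : ℕ × ℕ => searchFail r p.1 p.2 := by
  refine Partrec.rfind (p := fun (p : ℕ × ℕ) (z : ℕ) => Part.some (!r p.1 p.2 z)) ?_
  have h : Computable fun q : (ℕ × ℕ) × ℕ => r q.1.1 q.1.2 q.2 :=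
    Computable.comp (g := fun q : (ℕ × ℕ) × ℕ => (q.1.1, q.1.2, q.2)) hr
      ((Computable.fst.comp Computable.fst).pair
        ((Computable.snd.comp Computable.fst).pair Computable.snd))
  exact (Primrec.not.to_comp.comp h).partrec

/-- The operation sending `f` to its restriction to `{m | ∃ z, ¬ r x m z}`. -/
def restrictOp {r : ℕ → ℕ → ℕ → Bool}
    (hr : Computable fun x : ℕ × ℕ × ℕ => r x.1 x.2.1 x.2.2) (x : ℕ) (f : PRFun) : PRFun :=
  ⟨fun m => (searchFail r x m).bind fun _ => f.val m, Partrec.nat_iff.1 <| by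
    have h1 : Partrec fun m => searchFail r x m :=
      (partrec_searchFail hr).comp ((Computable.const x).pair Computable.id)
    exact h1.bind ((Partrec.nat_iff.2 f.2).comp Computable.fst)⟩

/-- A partial function of which all `restrictOp hr x (φ_a)` are sections. -/
def restrictUniversal (r : ℕ → ℕ → ℕ → Bool) (n : ℕ) : Part ℕ :=
  (searchFail r n.unpair.1.unpair.1 n.unpair.2).bind fun _ =>
    phi n.unpair.1.unpair.2 n.unpair.2

theorem partrec_restrictUniversal {r : ℕ → ℕ → ℕ → Bool}
    (hr : Computable fun x : ℕ × ℕ × ℕ => r x.1 x.2.1 x.2.2) :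
    Partrec (restrictUniversal r) := by
  have hl : Computable fun n : ℕ => n.unpair.1 := Computable.fst.comp Computable.unpair
  have hrt : Computable fun n : ℕ => n.unpair.2 := Computable.snd.comp Computable.unpair
  have h1 : Partrec fun n : ℕ => searchFail r n.unpair.1.unpair.1 n.unpair.2 :=
    Partrec.comp (g := fun n : ℕ => (n.unpair.1.unpair.1, n.unpair.2))
      (partrec_searchFail hr) ((hl.comp hl).pair hrt)
  have h2 : Partrec fun n : ℕ => phi n.unpair.1.unpair.2 n.unpair.2 :=
    Nat.Partrec.Code.eval_part.comp ((Computable.ofNat Code).comp (hrt.comp hl)) hrt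
  have h3 : Partrec₂ fun (n : ℕ) (_ : ℕ) => phi n.unpair.1.unpair.2 n.unpair.2 :=
    Partrec.comp (g := Prod.fst) h2 Computable.fst
  exact h1.bind h3

/-- The operations `restrictOp hr x` are given by a recursive function on Gödel numbers, uniformly
in `x`. -/
theorem exists_index_restrictOp {r : ℕ → ℕ → ℕ → Bool}
    (hr : Computable fun x : ℕ × ℕ × ℕ => r x.1 x.2.1 x.2.2) :
    ∃ s : ℕ → ℕ → ℕ, Computable₂ s ∧ ∀ x a, restrictOp hr x (phiP a) = phiP (s x a) := by
  obtain ⟨c, hc⟩ := Nat.Partrec.Code.exists_code.1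
    (Partrec.nat_iff.1 (partrec_restrictUniversal hr))
  refine ⟨fun x a => Encodable.encode (Code.curry c (Nat.pair x a)), ?_, ?_⟩
  · exact Computable.encode.comp (Nat.Partrec.Code.primrec₂_curry.to_comp.comp
      (Computable.const c) Primrec₂.natPair.to_comp)
  · intro x a
    apply Subtype.ext
    funext m
    simp [restrictOp, restrictUniversal, phiP, phi, Nat.Partrec.Code.eval_curry, hc]

theorem restrictOp_eq_It_zero_iff {r : ℕ → ℕ → ℕ → Bool}
    (hr : Computable fun x : ℕ × ℕ × ℕ => r x.1 x.2.1 x.2.2) (x : ℕ) :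
    restrictOp hr x = ItFun 0 ↔ ∀ y, ∃ z, r x y z = false := by
  constructor
  · intro h y
    have h1 := congrArg Subtype.val
      (congrFun h ⟨fun m => Part.some m, Partrec.nat_iff.1 Computable.id.partrec⟩)
    have h2 : (searchFail r x y).bind (fun _ => Part.some y) = Part.some y := congrFun h1 y
    have h3 : y ∈ (searchFail r x y).bind (fun _ => Part.some y) := by simp [h2]
    obtain ⟨z, hz, -⟩ := Part.mem_bind_iff.1 h3
    exact searchFail_dom.1 (Part.dom_iff_mem.2 ⟨z, hz⟩)
  · intro h
    funext f
    apply Subtype.ext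
    funext m
    obtain ⟨z, hz⟩ := Part.dom_iff_mem.1 (searchFail_dom.2 (h m))
    simp [restrictOp, ItFun, Part.eq_some_iff.2 hz]

theorem computable_replicate_true : Computable fun n : ℕ => List.replicate n true := by
  refine (Primrec.nat_rec₁ (f := fun (_ : ℕ) (l : List Bool) => true :: l) []
    (Primrec.list_cons.comp (Primrec.const true) Primrec.snd)).to_comp.of_eq fun n => ?_
  induction n with
  | zero => rfl
  | succ n ih => simp_all [List.replicate_succ]

theorem manyOneReducible_eq_It {U : List Bool → Eff} {comp : List Bool → List Bool → List Bool}
    (hU : IsUniversalVia U comp) {B : Set ℕ} (hB : IsPi2 B) :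
    ManyOneReducible (· ∈ B) (· ∈ {q : List Bool × ℕ | U q.1 = It q.2}) := by
  obtain ⟨-, hcomp, hrange⟩ := hU
  obtain ⟨r, hr, hBr⟩ := hB
  obtain ⟨s, hs, hsr⟩ := exists_index_restrictOp hr
  let G : List Bool → Eff := fun p =>
    ⟨restrictOp hr p.length, s p.length, hs.comp (Computable.const _) Computable.id, hsr _⟩
  have hG : IsEffMap G :=
    ⟨fun p a => s p.length a,
      hs.comp (Computable.list_length.comp Computable.fst) Computable.snd, fun p a => hsr _ a⟩
  obtain ⟨e, he⟩ : G ∈ Set.range fun e p => U (comp e p) := hrange ▸ hG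
  refine ⟨fun x => (comp e (List.replicate x true), 0),
    (hcomp.comp (Computable.const e) computable_replicate_true).pair (Computable.const 0), ?_⟩
  intro x
  have h1 : U (comp e (List.replicate x true)) = G (List.replicate x true) := congrFun he _
  have h2 : G (List.replicate x true) = It 0 ↔ restrictOp hr x = ItFun 0 := by
    refine Subtype.ext_iff.trans ?_
    simp only [G, It, List.length_replicate]
  have h3 : x ∈ B ↔ ∀ y, ∃ z, r x y z = false := by
    rw [← not_iff_not, ← Set.mem_compl_iff, hBr]
    simp
  change x ∈ B ↔ U (comp e (List.replicate x true)) = It 0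
  rw [h1, h2, restrictOp_eq_It_zero_iff, h3]

/-- The set of pairs `(e,n)` such that `U(e) = It_n` is `Π⁰₂`-complete. -/
theorem stmt3 (U : List Bool → Eff) (hU : IsStronglyUniversal U) :
    IsPi2Complete {q : List Bool × ℕ | U q.1 = It q.2} := by
  obtain ⟨comp, hcomp, -⟩ := hU
  exact ⟨isPi2_eq_It hcomp.1, fun _ hB => manyOneReducible_eq_It hcomp hB⟩
end

section
/- Programs are finite binary words $p\in\{0,1\}^*$, with length $|p|$; for $f,g:\mathbb N\to\mathbb N$, $f=_{\mathrm{ct}}g$ means that there is a constant $c$ with $|f(n)-g(n)|\le c$ for all $n$. Let $PR(\mathbb N\to\mathbb N)$ be the set of partial recursive functions $\mathbb N\rightharpoonup\mathbb N$; a map $G:\{0,1\}^*\to PR(\mathbb N\to\mathbb N)$ is *partial-recursively given* if some total recursive function sends each $p$ to a Gödel number of $G(p)$. Let $U:\{0,1\}^*\to PR(\mathbb N\to\mathbb N)$ be a strongly universal enumeration: $U$ is partial-recursively given, and there is a total recursive $\mathrm{comp}:\{0,1\}^*\times\{0,1\}^*\to\{0,1\}^*$ such that the maps $p\mapsto U(\mathrm{comp}(e,p))$,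 $e\in\{0,1\}^*$, are exactly the partial-recursively given maps, and for each $e$ there is a constant $c(e)$ with $|\mathrm{comp}(e,p)|\le|p|+c(e)$ for all $p$. Put $$K^{\mathbb N}_{card}(n)=\min\{|p| : \mathrm{dom}(U(p))\text{ is finite with exactly } n\text{ elements}\}.$$ Let $K^\infty(n)$ be the shortest length of a program which, through a possibly infinite computation, outputs $n$ in unary, i.e. emits the symbol $1$ at exactly $n$ steps. Here programs are run on a strongly universal device, in either of the following two senses. (a) The device is a partial recursive $V:\{0,1\}^*\times\mathbb N\rightharpoonup\mathbb N$, where $p$ emits a symbol at step $t$ iff $V(p,t)$ converges. Strongly universal means that, for some total recursive $\mathrm{comp}$ with $|\mathrm{comp}(e,p)|\le |p|+c(e)$, the functions $(p,t)\mapsto V(\mathrm{comp}(e,p),t)$ are exactly the partial recursive functions $\{0,1\}^*\times\mathbb N\rightharpoonup\mathbb N$. (b) The device is a total recursive $M:\{0,1\}^*\times\mathbb N\to\{0,1\}$, where $p$ emits a symbol at step $t$ iff $M(p,t)=1$. Strongly universal means that, for some total recursive $\mathrm{comp}$ with $|\mathrm{comp}(e,p)|\le|p|+c(e)$, for every total recursive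 $W:\{0,1\}^*\times\mathbb N\to\{0,1\}$ there is $e$ such that for all $p$ the number (finite or infinite) of $t$ with $M(\mathrm{comp}(e,p),t)=1$ equals the number of $t$ with $W(p,t)=1$. Then, for every such $U$ and every such device, in sense (a) as well as in sense (b), $$K^{\mathbb N}_{card}=_{\mathrm{ct}}K^\infty .$$ -/
open Nat.Partrec (Code)

/-- `f =ct g` : there is a constant `c` with `|f(n) − g(n)| ≤ c` for all `n`. -/
def EqCt (f g : ℕ → ℕ) : Prop := ∃ c : ℕ, ∀ n : ℕ, |(f n : ℤ) - (g n : ℤ)| ≤ (c : ℤ)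

/-- A map `G : {0,1}* → PR(ℕ→ℕ)` is partial-recursively given: some total recursive
function sends each program `p` to a Gödel number of `G p`. -/
def PRGiven (G : Word → PRFun) : Prop :=
  ∃ h : Word → ℕ, Computable h ∧ ∀ p : Word, (G p).val = phi (h p)

/-- `U^E : {0,1}* → PR(ℕ→ℕ)` is a strongly universal enumeration of the partial recursive
functions `ℕ ⇀ ℕ`: it is itself partial-recursively given, and, for a total recursive `comp`,
the maps `p ↦ U^E(comp(e,p))` are exactly the partial-recursively given maps, with
`|comp(e,p)| ≤ |p| + c(e)`. -/
def StronglyUniversalEnum (U : Word → PRFun) : Prop :=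
  PRGiven U ∧
    ∃ comp : Word → Word → Word, Computable₂ comp ∧
      (∀ e : Word, PRGiven fun p => U (comp e p)) ∧
      (∀ G : Word → PRFun, PRGiven G → ∃ e : Word, ∀ p : Word, U (comp e p) = G p) ∧
      (∀ e : Word, ∃ c : ℕ, ∀ p : Word, (comp e p).length ≤ p.length + c)

/-- The cardinal Kolmogorov complexity:
`K^ℕ_card(n) = min{|p| : dom(U^E(p))` is finite with exactly `n` elements`}`. -/
noncomputable def Kcard (U : Word → PRFun) (n : ℕ) : ℕ :=
  sInf {k : ℕ | ∃ p : Word, p.length = k ∧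
    {x : ℕ | ((U p).val x).Dom}.Finite ∧ {x : ℕ | ((U p).val x).Dom}.ncard = n}

/-- `V : {0,1}* × ℕ ⇀ ℕ` is a strongly universal partial recursive function; convergence of
`V(p,t)` is read as: program `p` emits an output symbol `1` at step `t` of its possibly
infinite computation. -/
def StronglyUniversalPartrec (V : Word → ℕ →. ℕ) : Prop :=
  Partrec₂ V ∧
    ∃ comp : Word → Word → Word, Computable₂ comp ∧
      (∀ e : Word, Partrec₂ fun p => V (comp e p)) ∧
      (∀ W : Word → ℕ →. ℕ, Partrec₂ W →
        ∃ e : Word, ∀ (p : Word) (t : ℕ), V (comp e p) t = W p t) ∧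
      (∀ e : Word, ∃ c : ℕ, ∀ p : Word, (comp e p).length ≤ p.length + c)

/-- `K^∞(n)` : the length of a shortest (possibly non halting) program which outputs
`n` in unary, i.e. emits exactly `n` output symbols, where emission at step `t` is
convergence of `V(p,t)`. -/
noncomputable def KInf (V : Word → ℕ →. ℕ) (n : ℕ) : ℕ :=
  sInf {k : ℕ | ∃ p : Word, p.length = k ∧
    {t : ℕ | (V p t).Dom}.Finite ∧ {t : ℕ | (V p t).Dom}.ncard = n}

/-- A strongly universal machine with unary output and possibly infinite computations, run
step by step: `M p t = true` means that program `p` emits the symbol `1` at step `t`, which is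
decidable. Every other such machine `W` is emulated through a compiler `comp(e,·)` that adds a
bounded number of bits: the emulation has the same (finite or infinite) unary output, though
not necessarily at the same steps. -/
def StronglyUniversalUnary (M : Word → ℕ → Bool) : Prop :=
  Computable₂ M ∧
    ∃ comp : Word → Word → Word, Computable₂ comp ∧
      (∀ W : Word → ℕ → Bool, Computable₂ W → ∃ e : Word, ∀ p : Word,
        {t : ℕ | M (comp e p) t = true}.encard = {t : ℕ | W p t = true}.encard) ∧
      (∀ e : Word, ∃ c : ℕ, ∀ p : Word, (comp e p).length ≤ p.length + c)

/-- `K^∞(n)` for a machine run step by step: the length of a shortest program whose possibly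
infinite computation emits exactly `n` output symbols. -/
noncomputable def KInfStep (M : Word → ℕ → Bool) (n : ℕ) : ℕ :=
  sInf {k : ℕ | ∃ p : Word, p.length = k ∧
    {t : ℕ | M p t = true}.Finite ∧ {t : ℕ | M p t = true}.ncard = n}

/-- The length of a shortest program `p` for which `A p` is finite with exactly `n` elements. -/
noncomputable def cardComplexity (A : Word → Set ℕ) (n : ℕ) : ℕ :=
  sInf {k : ℕ | ∃ p : Word, p.length = k ∧ (A p).Finite ∧ (A p).ncard = n}

/-- `B` emulates `A`: a compiler adding boundedly many bits preserves cardinalities. -/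
def CardEmulates (B A : Word → Set ℕ) : Prop :=
  ∃ (f : Word → Word) (c : ℕ), ∀ p : Word,
    (B (f p)).encard = (A p).encard ∧ (f p).length ≤ p.length + c

theorem finite_ncard_iff_encard {α : Type*} (s : Set α) (n : ℕ) :
    (s.Finite ∧ s.ncard = n) ↔ s.encard = n := by
  constructor
  · rintro ⟨hs, rfl⟩
    exact hs.cast_ncard_eq.symm
  · intro h
    have hs : s.Finite := Set.finite_of_encard_eq_coe h
    exact ⟨hs, by rw [Set.ncard, h]; rfl⟩

theorem CardEmulates.exists_program {A B : Word → Set ℕ} (h : CardEmulates B A) :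
    ∃ c : ℕ, ∀ (n : ℕ) (p : Word), (A p).Finite ∧ (A p).ncard = n →
      ∃ q : Word, q.length ≤ p.length + c ∧ (B q).Finite ∧ (B q).ncard = n := by
  obtain ⟨f, c, hf⟩ := h
  refine ⟨c, fun n p hp => ⟨f p, (hf p).2, ?_⟩⟩
  rw [finite_ncard_iff_encard] at hp ⊢
  rw [(hf p).1, hp]

theorem CardEmulates.cardComplexity_le {A B : Word → Set ℕ} (h : CardEmulates B A) :
    ∃ c : ℕ, ∀ n : ℕ, (∃ p : Word, (A p).Finite ∧ (A p).ncard = n) →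
      cardComplexity B n ≤ cardComplexity A n + c := by
  obtain ⟨c, hc⟩ := h.exists_program
  refine ⟨c, fun n ⟨p₀, hp₀⟩ => ?_⟩
  obtain ⟨p, hp, hA⟩ : cardComplexity A n ∈
      {k : ℕ | ∃ p : Word, p.length = k ∧ (A p).Finite ∧ (A p).ncard = n} :=
    Nat.sInf_mem ⟨_, p₀, rfl, hp₀⟩
  obtain ⟨q, hq, hB⟩ := hc n p hA
  rw [← hp]
  exact (Nat.sInf_le ⟨q, rfl, hB⟩ : cardComplexity B n ≤ q.length).trans hq

theorem cardComplexity_eq_zero {A : Word → Set ℕ} {n : ℕ}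
    (h : ¬ ∃ p : Word, (A p).Finite ∧ (A p).ncard = n) : cardComplexity A n = 0 := by
  refine Nat.sInf_eq_zero.2 (Or.inr (Set.eq_empty_of_forall_notMem ?_))
  rintro k ⟨p, -, hp⟩
  exact h ⟨p, hp⟩

theorem EqCt.of_cardEmulates {A B : Word → Set ℕ} (hBA : CardEmulates B A)
    (hAB : CardEmulates A B) : EqCt (cardComplexity A) (cardComplexity B) := by
  obtain ⟨c, hc⟩ := hBA.cardComplexity_le
  obtain ⟨d, hd⟩ := hAB.cardComplexity_le
  obtain ⟨_, hA⟩ := hBA.exists_program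
  obtain ⟨_, hB⟩ := hAB.exists_program
  refine ⟨c + d, fun n => ?_⟩
  by_cases h : ∃ p : Word, (A p).Finite ∧ (A p).ncard = n
  · have h' : ∃ p : Word, (B p).Finite ∧ (B p).ncard = n := by
      obtain ⟨p, hp⟩ := h
      obtain ⟨q, -, hq⟩ := hA n p hp
      exact ⟨q, hq⟩
    have h₁ := hc n h
    have h₂ := hd n h'
    rw [abs_le]
    constructor <;> push_cast <;> omega
  · have h' : ¬ ∃ p : Word, (B p).Finite ∧ (B p).ncard = n := by
      rintro ⟨p, hp⟩
      obtain ⟨q, -, hq⟩ := hB n p hp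
      exact h ⟨q, hq⟩
    rw [cardComplexity_eq_zero h, cardComplexity_eq_zero h']
    simp only [sub_self, abs_zero]
    positivity

/-- The s-m-n theorem for functions with a program as parameter. -/
theorem Partrec₂.exists_computable_index {W : Word → ℕ →. ℕ} (hW : Partrec₂ W) :
    ∃ h : Word → ℕ, Computable h ∧ ∀ p : Word, W p = phi (h p) := by
  have hW' : Partrec fun m : ℕ =>
      (Part.ofOption (Encodable.decode (α := Word) m.unpair.1)).bind fun p => W p m.unpair.2 := by
    refine Partrec.bind (Computable.ofOption (Computable.decode.comp
      (Computable.fst.comp Computable.unpair))) ?_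
    exact hW.comp Computable.snd
      (Computable.snd.comp (Computable.unpair.comp Computable.fst))
  obtain ⟨c, hc⟩ := Code.exists_code.1 (Partrec.nat_iff.1 hW')
  refine ⟨fun p => Encodable.encode (c.curry (Encodable.encode p)), ?_, fun p => ?_⟩
  · exact Computable.encode.comp
      (Code.primrec₂_curry.to_comp.comp (Computable.const c) Computable.encode)
  · funext t
    simp [phi, Code.eval_curry, hc]

/-- A partial-recursively given family is a partial recursive function of program and argument. -/
theorem PRGiven.partrec₂ {G : Word → PRFun} (hG : PRGiven G) :
    Partrec₂ fun (p : Word) (t : ℕ) => (G p).val t := by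
  obtain ⟨h, hh, hG⟩ := hG
  have : Partrec₂ fun (p : Word) (t : ℕ) => (Denumerable.ofNat Code (h p)).eval t :=
    Code.eval_part.comp
      ((Computable.ofNat Code).comp (hh.comp Computable.fst)) Computable.snd
  exact this.of_eq fun a => (congrFun (hG a.1) a.2).symm

theorem StronglyUniversalEnum.cardEmulates_dom {U : Word → PRFun} (hU : StronglyUniversalEnum U)
    {W : Word → ℕ →. ℕ} (hW : Partrec₂ W) :
    CardEmulates (fun p => {x : ℕ | ((U p).val x).Dom}) fun p => {t : ℕ | (W p t).Dom} := by
  obtain ⟨-, comp, -, -, huniv, hlen⟩ := hU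
  obtain ⟨h, hh, hWh⟩ := hW.exists_computable_index
  obtain ⟨e, he⟩ := huniv
    (fun p => ⟨W p, by rw [hWh p]; exact Code.exists_code.2 ⟨_, rfl⟩⟩) ⟨h, hh, hWh⟩
  obtain ⟨c, hc⟩ := hlen e
  refine ⟨comp e, c, fun p => ⟨?_, hc p⟩⟩
  simp only [he]

theorem StronglyUniversalPartrec.cardEmulates_dom {V : Word → ℕ →. ℕ}
    (hV : StronglyUniversalPartrec V) {W : Word → ℕ →. ℕ} (hW : Partrec₂ W) :
    CardEmulates (fun p => {t : ℕ | (V p t).Dom}) fun p => {t : ℕ | (W p t).Dom} := by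
  obtain ⟨-, comp, -, -, huniv, hlen⟩ := hV
  obtain ⟨e, he⟩ := huniv W hW
  obtain ⟨c, hc⟩ := hlen e
  refine ⟨comp e, c, fun p => ⟨?_, hc p⟩⟩
  simp only [he]

theorem StronglyUniversalUnary.cardEmulates {M : Word → ℕ → Bool}
    (hM : StronglyUniversalUnary M) {W : Word → ℕ → Bool} (hW : Computable₂ W) :
    CardEmulates (fun p => {t : ℕ | M p t = true}) fun p => {t : ℕ | W p t = true} := by
  obtain ⟨-, comp, -, huniv, hlen⟩ := hM
  obtain ⟨e, he⟩ := huniv W hW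
  obtain ⟨c, hc⟩ := hlen e
  exact ⟨comp e, c, fun p => ⟨he p, hc p⟩⟩

/-- A decidable emission relation is the domain of a partial recursive function. -/
theorem Computable₂.exists_partrec₂_dom {M : Word → ℕ → Bool} (hM : Computable₂ M) :
    ∃ W : Word → ℕ →. ℕ, Partrec₂ W ∧ ∀ p t, (W p t).Dom ↔ M p t = true := by
  refine ⟨fun p t => bif M p t then Part.some 0 else Part.none, ?_, fun p t => ?_⟩
  · exact Partrec.cond hM (Computable.const 0).partrec Partrec.none
  · change (bif M p t then Part.some 0 else Part.none).Dom ↔ _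
    cases M p t <;> simp

/-- Whether the computation of `c` on `x` succeeds with fuel `s + 1` but not with fuel `s`,
where `t` encodes the pair `(x, s)`. -/
def haltsFirstAt (c : Code) (t : ℕ) : Bool :=
  (Code.evaln (t.unpair.2 + 1) c t.unpair.1).isSome &&
    !(Code.evaln t.unpair.2 c t.unpair.1).isSome

theorem primrec₂_haltsFirstAt : Primrec₂ haltsFirstAt := by
  have hx : Primrec fun a : Code × ℕ => a.2.unpair.1 :=
    Primrec.fst.comp (Primrec.unpair.comp Primrec.snd)
  have hs : Primrec fun a : Code × ℕ => a.2.unpair.2 :=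
    Primrec.snd.comp (Primrec.unpair.comp Primrec.snd)
  have hev : ∀ {k : Code × ℕ → ℕ}, Primrec k →
      Primrec fun a : Code × ℕ => (Code.evaln (k a) a.1 a.2.unpair.1).isSome := fun hk =>
    Primrec.option_isSome.comp (Code.primrec_evaln.comp ((hk.pair Primrec.fst).pair hx))
  exact Primrec.and.comp (hev (Primrec.succ.comp hs)) (Primrec.not.comp (hev hs))

theorem isSome_evaln_mono {c : Code} {x k₁ k₂ : ℕ} (h : k₁ ≤ k₂)
    (hk : (Code.evaln k₁ c x).isSome = true) : (Code.evaln k₂ c x).isSome = true := by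
  obtain ⟨y, hy⟩ := Option.isSome_iff_exists.1 hk
  exact Option.isSome_iff_exists.2 ⟨y, Code.evaln_mono h hy⟩

/-- A code first halts at exactly one stage on each input in its domain. -/
theorem encard_haltsFirstAt (c : Code) :
    {t : ℕ | haltsFirstAt c t = true}.encard = {x : ℕ | (c.eval x).Dom}.encard := by
  have himage : (fun t : ℕ => t.unpair.1) '' {t : ℕ | haltsFirstAt c t = true} =
      {x : ℕ | (c.eval x).Dom} := by
    ext x
    constructor
    · rintro ⟨t, ht, rfl⟩
      simp only [Set.mem_ofPred_eq, haltsFirstAt, Bool.and_eq_true] at ht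
      obtain ⟨y, hy⟩ := Option.isSome_iff_exists.1 ht.1
      exact Part.dom_iff_mem.2 ⟨y, Code.evaln_sound hy⟩
    · intro hx
      obtain ⟨y, hy⟩ := Part.dom_iff_mem.1 hx
      have hex : ∃ k, (Code.evaln k c x).isSome = true := by
        obtain ⟨k, hk⟩ := Code.evaln_complete.1 hy
        exact ⟨k, Option.isSome_iff_exists.2 ⟨y, hk⟩⟩
      obtain ⟨s, hs⟩ : ∃ s, Nat.find hex = s + 1 := by
        refine Nat.exists_eq_succ_of_ne_zero fun h0 => ?_
        have := Nat.find_spec hex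
        rw [h0] at this
        simp [Code.evaln] at this
      refine ⟨Nat.pair x s, ?_, by simp⟩
      have h₁ := Nat.find_spec hex
      have h₂ := Nat.find_min hex (m := s) (by omega)
      rw [hs] at h₁
      simp [haltsFirstAt, h₁, Option.not_isSome_iff_eq_none.1 h₂]
  have hinj : Set.InjOn (fun t : ℕ => t.unpair.1) {t : ℕ | haltsFirstAt c t = true} := by
    intro t ht u hu htu
    simp only [Set.mem_ofPred_eq, haltsFirstAt, Bool.and_eq_true, Bool.not_eq_true'] at ht hu htu
    rw [← htu] at hu
    have h₁ : t.unpair.2 ≤ u.unpair.2 := by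
      by_contra! h
      simpa [ht.2] using isSome_evaln_mono (Nat.succ_le_of_lt h) hu.1
    have h₂ : u.unpair.2 ≤ t.unpair.2 := by
      by_contra! h
      simpa [hu.2] using isSome_evaln_mono (Nat.succ_le_of_lt h) ht.1
    rw [← Nat.pair_unpair t, ← Nat.pair_unpair u, htu, h₁.antisymm h₂]
  rw [← himage, hinj.encard_image]

/-- The domains of a partial-recursively given family have the cardinalities of the outputs of
a machine run step by step. -/
theorem PRGiven.exists_computable₂_encard {G : Word → PRFun} (hG : PRGiven G) :
    ∃ W : Word → ℕ → Bool, Computable₂ W ∧ ∀ p : Word,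
      {t : ℕ | W p t = true}.encard = {x : ℕ | ((G p).val x).Dom}.encard := by
  obtain ⟨h, hh, hG⟩ := hG
  refine ⟨fun p t => haltsFirstAt (Denumerable.ofNat Code (h p)) t, ?_, fun p => ?_⟩
  · exact primrec₂_haltsFirstAt.to_comp.comp
      ((Computable.ofNat Code).comp (hh.comp Computable.fst)) Computable.snd
  · rw [encard_haltsFirstAt, hG]
    rfl

/-- `K^ℕ_card =ct K^∞`, where the emission of an output symbol at step `t` is read either as
convergence of `V(p,t)` or as a decidable event of a step-by-step computation. -/
theorem stmt13 (U : Word → PRFun) (hU : StronglyUniversalEnum U) :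
    (∀ V : Word → ℕ →. ℕ, StronglyUniversalPartrec V → EqCt (Kcard U) (KInf V)) ∧
    (∀ M : Word → ℕ → Bool, StronglyUniversalUnary M → EqCt (Kcard U) (KInfStep M)) := by
  refine ⟨fun V hV => ?_, fun M hM => ?_⟩
  · exact EqCt.of_cardEmulates (hV.cardEmulates_dom hU.1.partrec₂) (hU.cardEmulates_dom hV.1)
  · obtain ⟨W, hW, hWdom⟩ := hM.1.exists_partrec₂_dom
    obtain ⟨N, hN, hNcard⟩ := hU.1.exists_computable₂_encard
    obtain ⟨f, c, hf⟩ := hM.cardEmulates hN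
    have hMU : CardEmulates (fun p => {t : ℕ | M p t = true})
        fun p => {x : ℕ | ((U p).val x).Dom} :=
      ⟨f, c, fun p => ⟨(hf p).1.trans (hNcard p), (hf p).2⟩⟩
    have hUM := hU.cardEmulates_dom hW
    simp only [hWdom] at hUM
    exact EqCt.of_cardEmulates hMU hUM
end
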